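/- Let p and q be prime integers with p ≠ q, k ≥ 0 an integer, and let Δ ⊂ ℝ^d be a lattice simplex of dimension d which has δ-polynomial 1 + t^{k+1} + t^{2(k+1)} + ⋯ + t^{(pq−1)(k+1)} and is not a lattice pyramid over any lower-dimensional lattice simplex. Then Δ is unimodularly equivalent to one of the following five simplices: (1) Δ(A₁) where A₁ = (1, …, 1, pq) has pq(k+1) − 2 entries equal to 1 followed by pq (here d = pq(k+1) − 1); (2) Δ(B₁, C₁) where B₁ = (1, …, 1, p) has p(k+1) − 1 entries equal to 1 followed by p (so s = p(k+1)), and C₁ = (q, …, q, 1, …, 1, q) has p(k+1) entries equal to q, then pq(k+1) − 2 entries equal to 1, then q (here d = p(q+1)(k+1) − 1); (3) Δ(B₂, C₂) where B₂ = (1, …, 1, q) has q(k+1) − 1 entries equal to 1 followed by q (so s = q(k+1)), and C₂ = (p, …, p, 1, …, 1, p) has q(k+1) entries equal to p, then pq(k+1) − 2 entries equal to 1, then p (here d = (p+1)q(k+1) − 1); (4) Δ(A₂) where A₂ = (1, …, 1, p, …, p, pq) has p(k+1) − 1 entries equal to 1, then (pq−1)(k+1) − 1 entries equal to p, then pq (here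 d = (pq + p − 1)(k+1) − 1); (5) Δ(A₃) where A₃ = (1, …, 1, q, …, q, pq) has q(k+1) − 1 entries equal to 1, then (pq−1)(k+1) − 1 entries equal to q, then pq (here d = (pq + q − 1)(k+1) − 1). -/

import Mathlib

open scoped BigOperators Pointwise

/-- `Δ ⊆ ℝ^d` is a lattice simplex of dimension `d`:
the convex hull of `d+1` affinely independent points of `ℤ^d`. -/
def IsLatticeSimplex {d : ℕ} (Δ : Set (Fin d → ℝ)) : Prop :=
  ∃ V : Fin (d+1) → (Fin d → ℤ),
    AffineIndependent ℝ (fun i => (fun j => ((V i j : ℤ) : ℝ))) ∧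
    Δ = convexHull ℝ (Set.range (fun i => (fun j => ((V i j : ℤ) : ℝ))))

/-- The number of lattice points of a subset of `ℝ^d`. -/
noncomputable def latticePointCount {d : ℕ} (S : Set (Fin d → ℝ)) : ℕ :=
  Set.ncard {x : Fin d → ℤ | (fun j => ((x j : ℤ) : ℝ)) ∈ S}

/-- `Δ` has `δ`-polynomial `1 + t^(k+1) + t^(2(k+1)) + ⋯ + t^((v-1)(k+1))`:
the coefficientwise form of the Ehrhart series identity. -/
def HasDeltaPolySimplex (d v k : ℕ) (Δ : Set (Fin d → ℝ)) : Prop :=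
  ∀ n : ℕ, latticePointCount ((n : ℝ) • Δ) =
    ∑ j ∈ Finset.range v,
      if j * (k+1) ≤ n then Nat.choose (n - j * (k+1) + d) d else 0

/-- Unimodular equivalence of subsets of `ℝ^d`. -/
def UnimodEquiv {d : ℕ} (P Q : Set (Fin d → ℝ)) : Prop :=
  ∃ U : Matrix (Fin d) (Fin d) ℤ, ∃ w : Fin d → ℤ,
    IsUnit U.det ∧
    Q = (fun x : Fin d → ℝ =>
      Matrix.vecMul x (U.map (fun a : ℤ => (a : ℝ))) + (fun j => ((w j : ℤ) : ℝ))) '' P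

/-- The lattice pyramid over `Q ⊆ ℝ^e`. -/
def Pyr {e : ℕ} (Q : Set (Fin e → ℝ)) : Set (Fin (e+1) → ℝ) :=
  convexHull ℝ
    (((fun x : Fin e → ℝ => Fin.snoc x 0) '' Q) ∪ {Fin.snoc (0 : Fin e → ℝ) 1})

/-- The last entry of a finite integer sequence (junk value `0` if empty). -/
def lastEntry {n : ℕ} (A : Fin n → ℤ) : ℤ :=
  if h : 0 < n then A ⟨n-1, by omega⟩ else 0

/-- The last row `(a_d - a_1, …, a_d - a_{d-1}, a_d)` of the vertex matrix of `Δ(A)`. -/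
def rowA {d : ℕ} (A : Fin d → ℤ) : Fin d → ℝ :=
  fun j => ((lastEntry A - if (j : ℕ) + 1 < d then A j else 0 : ℤ) : ℝ)

/-- The simplex `Δ(A)`: the convex hull of the origin, the unit vectors
`e_1, …, e_{d-1}` and the row `(a_d - a_1, …, a_d - a_{d-1}, a_d)`. -/
def simplexA {d : ℕ} (A : Fin d → ℤ) : Set (Fin d → ℝ) :=
  convexHull ℝ (insert 0 (Set.range (fun i : Fin d =>
    if (i : ℕ) + 1 < d then (Pi.single i 1 : Fin d → ℝ) else rowA A)))

/-- The row `(b_s - b_1, …, b_s - b_{s-1}, b_s, 0, …, 0)` of the vertex matrix of `Δ(B,C)`. -/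
def rowB {d : ℕ} (s : ℕ) (B : Fin s → ℤ) : Fin d → ℝ :=
  fun j =>
    if h : (j : ℕ) + 1 < s then ((lastEntry B - B ⟨(j : ℕ), by omega⟩ : ℤ) : ℝ)
    else if (j : ℕ) + 1 = s then ((lastEntry B : ℤ) : ℝ)
    else 0

/-- The simplex `Δ(B,C)`: the convex hull of the origin, the unit vectors
`e_1, …, e_{s-1}`, the row `(b_s - b_1, …, b_s - b_{s-1}, b_s, 0, …, 0)`,
the unit vectors `e_{s+1}, …, e_{d-1}` and the row `(c_d - c_1, …, c_d - c_{d-1}, c_d)`. -/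
def simplexBC {d : ℕ} (s : ℕ) (B : Fin s → ℤ) (C : Fin d → ℤ) : Set (Fin d → ℝ) :=
  convexHull ℝ (insert 0 (Set.range (fun i : Fin d =>
    if (i : ℕ) + 1 = s then rowB s B
    else if (i : ℕ) + 1 = d then rowA C
    else (Pi.single i 1 : Fin d → ℝ))))

/-- The representative in `[0, 1)` of a point of the circle `ℝ / ℤ`. -/
noncomputable def unitRep (x : UnitAddCircle) : ℝ := (AddCircle.equivIco 1 0 x : ℝ)

lemma coe_unitRep (x : UnitAddCircle) : ((unitRep x : ℝ) : UnitAddCircle) = x :=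
  AddCircle.coe_equivIco

lemma unitRep_nonneg (x : UnitAddCircle) : 0 ≤ unitRep x := (AddCircle.equivIco 1 0 x).2.1

lemma unitRep_lt_one (x : UnitAddCircle) : unitRep x < 1 := by
  exact (AddCircle.equivIco (1 : ℝ) 0 x).2.2.trans_eq (zero_add 1)

lemma unitRep_coe (x : ℝ) : unitRep (x : UnitAddCircle) = Int.fract x := by
  have := AddCircle.coe_equivIco_mk_apply (1 : ℝ) x
  simpa only [unitRep, div_one, mul_one] using this

lemma coe_unit_eq_zero_iff (x : ℝ) : (x : UnitAddCircle) = 0 ↔ ∃ n : ℤ, (n : ℝ) = x := by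
  rw [AddCircle.coe_eq_zero_iff]; simp

lemma unitRep_zero : unitRep 0 = 0 := by
  rw [← AddCircle.coe_zero, unitRep_coe, Int.fract_zero]

lemma unitRep_eq_zero_iff (x : UnitAddCircle) : unitRep x = 0 ↔ x = 0 := by
  refine ⟨fun h => ?_, fun h => by rw [h, unitRep_zero]⟩
  rw [← coe_unitRep x, h, AddCircle.coe_zero]

lemma eq_coe_of_unitRep_eq {x : UnitAddCircle} {a : ℝ} (h : unitRep x = a) :
    x = (a : UnitAddCircle) := by
  rw [← h, coe_unitRep]

lemma unitRep_add_unitRep_neg {x : UnitAddCircle} (hx : x ≠ 0) :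
    unitRep x + unitRep (-x) = 1 := by
  have h0 : unitRep x ≠ 0 := fun h => hx ((unitRep_eq_zero_iff x).1 h)
  have hf : Int.fract (unitRep x) = unitRep x :=
    Int.fract_eq_self.2 ⟨unitRep_nonneg x, unitRep_lt_one x⟩
  have h : unitRep (-x) = Int.fract (-unitRep x) := by
    rw [← unitRep_coe, AddCircle.coe_neg, coe_unitRep]
  rw [h, Int.fract_neg (by rwa [hf]), hf]
  ring

lemma one_div_le_unitRep {n : ℕ} (hn : 0 < n) {x : UnitAddCircle} (hx : x ≠ 0)
    (h : n • x = 0) : 1 / (n : ℝ) ≤ unitRep x := by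
  have hn' : (0 : ℝ) < n := by exact_mod_cast hn
  have h1 : ((n * unitRep x : ℝ) : UnitAddCircle) = 0 := by
    rw [← nsmul_eq_mul, AddCircle.coe_nsmul, coe_unitRep, h]
  obtain ⟨m, hm⟩ := (coe_unit_eq_zero_iff _).1 h1
  have hpos : 0 < unitRep x :=
    lt_of_le_of_ne (unitRep_nonneg x) fun h => hx ((unitRep_eq_zero_iff x).1 h.symm)
  have hm0 : (0 : ℝ) < m := by rw [hm]; positivity
  have hm1 : (1 : ℝ) ≤ m := by
    have : 0 < m := by exact_mod_cast hm0
    exact_mod_cast this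
  rw [div_le_iff₀ hn']
  linarith

section Height

variable {ι : Type*} [Fintype ι]

/-- The sum of the representatives in `[0, 1)` of the coordinates of a point of `(ℝ / ℤ)^ι`. -/
noncomputable def height (g : ι → UnitAddCircle) : ℝ := ∑ i, unitRep (g i)

open Classical in
/-- The set of nonzero coordinates. -/
noncomputable def circleSupport (g : ι → UnitAddCircle) : Finset ι :=
  Finset.univ.filter fun i => g i ≠ 0

lemma mem_circleSupport (g : ι → UnitAddCircle) (i : ι) : i ∈ circleSupport g ↔ g i ≠ 0 := by
  simp [circleSupport]

lemma height_eq_sum_circleSupport (g : ι → UnitAddCircle) :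
    height g = ∑ i ∈ circleSupport g, unitRep (g i) := by
  refine (Finset.sum_subset (Finset.subset_univ _) fun i _ hi => ?_).symm
  rw [mem_circleSupport, not_not] at hi
  rw [hi, unitRep_zero]

lemma circleSupport_neg (g : ι → UnitAddCircle) : circleSupport (-g) = circleSupport g := by
  ext i; simp [mem_circleSupport]

lemma height_add_height_neg (g : ι → UnitAddCircle) :
    height g + height (-g) = (circleSupport g).card := by
  rw [height_eq_sum_circleSupport, height_eq_sum_circleSupport (-g), circleSupport_neg,
    ← Finset.sum_add_distrib, Finset.card_eq_sum_ones, Nat.cast_sum]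
  refine Finset.sum_congr rfl fun i hi => ?_
  rw [mem_circleSupport] at hi
  rw [Pi.neg_apply, unitRep_add_unitRep_neg hi, Nat.cast_one]

/-- `G` is a finite subgroup of `(ℝ / ℤ)^ι` of order `N`, no coordinate vanishes on `G`, and
the heights of its elements are `0, c, 2c, …, (N - 1)c`, the height of `g` being `c * f g`. -/
structure HasProgressionHeights (G : AddSubgroup (ι → UnitAddCircle)) (c N : ℕ)
    (f : (ι → UnitAddCircle) → ℕ) : Prop where
  pos : 0 < c
  height_eq : ∀ g ∈ G, height g = c * f g
  inj : ∀ g ∈ G, ∀ g' ∈ G, f g = f g' → g = g'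
  lt : ∀ g ∈ G, f g < N
  surj : ∀ j < N, ∃ g ∈ G, f g = j
  card : Nat.card G = N
  full : ∀ i, ∃ g ∈ G, g i ≠ 0

end Height

lemma nsmul_ne_zero_of_prime {M : Type*} [AddMonoid M] {p : ℕ} (hp : p.Prime) {x : M}
    (hx : x ≠ 0) (h : p • x = 0) {u : ℕ} (hu : ¬ p ∣ u) : u • x ≠ 0 := by
  have := Fact.mk hp
  rwa [Ne, ← addOrderOf_dvd_iff_nsmul_eq_zero, addOrderOf_eq_prime h hx]

lemma eq_of_sum_le_card_mul {ι : Type*} (s : Finset ι) (r : ι → ℝ) (a : ℝ)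
    (h : ∀ i ∈ s, a ≤ r i) (hs : ∑ i ∈ s, r i ≤ s.card * a) : ∀ i ∈ s, r i = a := by
  have h1 : ∑ i ∈ s, a ≤ ∑ i ∈ s, r i := Finset.sum_le_sum h
  have h2 : ∑ i ∈ s, a = ∑ i ∈ s, r i :=
    le_antisymm h1 (by rw [Finset.sum_const, nsmul_eq_mul]; exact hs)
  intro i hi
  exact ((Finset.sum_eq_sum_iff_of_le h).1 h2 i hi).symm

lemma card_mul_le_sum {ι : Type*} (s : Finset ι) (r : ι → ℝ) (a : ℝ)
    (h : ∀ i ∈ s, a ≤ r i) : s.card * a ≤ ∑ i ∈ s, r i := by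
  rw [← nsmul_eq_mul, ← Finset.sum_const]; exact Finset.sum_le_sum h

/-- An additive subgroup of order `p * q` with `p`, `q` distinct primes has a generator. -/
lemma exists_generator {M : Type*} [AddCommGroup M] (G : AddSubgroup M) {p q : ℕ}
    (hp : p.Prime) (hq : q.Prime) (hpq : p ≠ q) (hcard : Nat.card G = p * q) :
    ∃ w ∈ G, addOrderOf w = p * q ∧ ∀ g ∈ G, ∃ n : ℕ, g = n • w := by
  have : Finite G := Nat.finite_of_card_ne_zero (by
    rw [hcard]; exact (Nat.mul_pos hp.pos hq.pos).ne')
  have := Fact.mk hp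
  have := Fact.mk hq
  obtain ⟨a, ha⟩ := exists_prime_addOrderOf_dvd_card' (G := G) p (hcard ▸ dvd_mul_right p q)
  obtain ⟨b, hb⟩ := exists_prime_addOrderOf_dvd_card' (G := G) q (hcard ▸ dvd_mul_left q p)
  have hw : addOrderOf (a + b) = p * q := by
    rw [(AddCommute.all a b).addOrderOf_add_eq_mul_addOrderOf_of_coprime, ha, hb]
    rw [ha, hb]
    exact (Nat.coprime_primes hp hq).2 hpq
  refine ⟨(a + b : G), (a + b).2, ?_, fun g hg => ?_⟩
  · rw [← hw]; exact AddSubgroup.addOrderOf_coe (a + b)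
  · have htop : AddSubgroup.zmultiples (a + b) = ⊤ := by
      apply AddSubgroup.eq_top_of_card_eq
      rw [Nat.card_zmultiples, hw, hcard]
    have hm : (⟨g, hg⟩ : G) ∈ AddSubgroup.zmultiples (a + b) := by rw [htop]; trivial
    obtain ⟨n, hn⟩ := (mem_multiples_iff_mem_zmultiples).2 hm
    refine ⟨n, ?_⟩
    have := congrArg (Subtype.val) hn
    simpa using this.symm

section Core

variable {ι : Type*} [Fintype ι] {G : AddSubgroup (ι → UnitAddCircle)} {c N : ℕ}
  {f : (ι → UnitAddCircle) → ℕ}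

namespace HasProgressionHeights

lemma apply_pos (H : HasProgressionHeights G c N f) {g : ι → UnitAddCircle} (hg : g ∈ G)
    (h0 : g ≠ 0) : 0 < f g := by
  rw [Nat.pos_iff_ne_zero]
  intro h
  have h1 := H.height_eq g hg
  rw [h, Nat.cast_zero, mul_zero] at h1
  refine h0 (funext fun i => ?_)
  exact (unitRep_eq_zero_iff _).1
    ((Finset.sum_eq_zero_iff_of_nonneg fun i _ => unitRep_nonneg (g i)).1 h1 i (Finset.mem_univ i))

lemma apply_zero (H : HasProgressionHeights G c N f) : f 0 = 0 := by
  have h1 := H.height_eq 0 G.zero_mem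
  have h2 : height (0 : ι → UnitAddCircle) = 0 := by simp [height, unitRep_zero]
  rw [h2] at h1
  have hc : (c : ℝ) ≠ 0 := by exact_mod_cast H.pos.ne'
  exact_mod_cast (mul_eq_zero.1 h1.symm).resolve_left hc

lemma mul_add_neg (H : HasProgressionHeights G c N f) {g : ι → UnitAddCircle} (hg : g ∈ G) :
    c * (f g + f (-g)) = (circleSupport g).card := by
  have h := height_add_height_neg g
  rw [H.height_eq g hg, H.height_eq _ (G.neg_mem hg)] at h
  have : ((c * (f g + f (-g)) : ℕ) : ℝ) = ((circleSupport g).card : ℕ) := by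
    push_cast; linarith
  exact_mod_cast this

lemma generator_apply_ne_zero (H : HasProgressionHeights G c N f) {w : ι → UnitAddCircle}
    (hgen : ∀ g ∈ G, ∃ n : ℕ, g = n • w) (i : ι) : w i ≠ 0 := by
  intro h
  obtain ⟨g, hg, hi⟩ := H.full i
  obtain ⟨n, rfl⟩ := hgen g hg
  exact hi (by rw [Pi.smul_apply, h, smul_zero])

end HasProgressionHeights

lemma coprime_nsmul_ne_zero {M : Type*} [AddMonoid M] {N n : ℕ} {x : M} (hx : x ≠ 0)
    (h : N • x = 0) (hn : n.Coprime N) : n • x ≠ 0 := by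
  intro h'
  have h1 := Nat.dvd_gcd (addOrderOf_dvd_of_nsmul_eq_zero h') (addOrderOf_dvd_of_nsmul_eq_zero h)
  rw [hn, Nat.dvd_one, AddMonoid.addOrderOf_eq_one_iff] at h1
  exact hx h1

/-- If the element of height `c` is supported everywhere, all its coordinates are `1 / N`. -/
lemma all_coordinates_eq (H : HasProgressionHeights G c N f) (hN : 2 ≤ N)
    {h : ι → UnitAddCircle} (hG : h ∈ G) (hf : f h = 1) (hfull : ∀ i, h i ≠ 0)
    (htors : N • h = 0) :
    Fintype.card ι = N * c ∧ ∀ i, h i = ((1 / (N : ℝ) : ℝ) : UnitAddCircle) := by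
  have hsupp : circleSupport h = Finset.univ := by ext i; simp [mem_circleSupport, hfull i]
  have h1 := H.mul_add_neg hG
  rw [hsupp, Finset.card_univ, hf] at h1
  have h2 := H.lt _ (G.neg_mem hG)
  obtain ⟨g, hg, hgf⟩ := H.surj (N - 1) (by omega)
  have hg0 : g ≠ 0 := by
    rintro rfl
    rw [H.apply_zero] at hgf
    omega
  have h3 := H.apply_pos (G.neg_mem hg) (neg_ne_zero.2 hg0)
  have h4 := H.mul_add_neg hg
  have h5 : (circleSupport g).card ≤ Fintype.card ι := Finset.card_le_univ _
  have hcard : Fintype.card ι = N * c := by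
    apply le_antisymm
    · rw [← h1, mul_comm]; exact Nat.mul_le_mul_right _ (by omega)
    · refine le_trans ?_ h5
      rw [← h4, mul_comm]; exact Nat.mul_le_mul_left _ (by omega)
  refine ⟨hcard, fun i => eq_coe_of_unitRep_eq ?_⟩
  refine eq_of_sum_le_card_mul Finset.univ (fun i => unitRep (h i)) _ (fun i _ =>
    one_div_le_unitRep (by omega) (hfull i) (congrFun htors i)) ?_ i (Finset.mem_univ i)
  have h6 : height h = c := by rw [H.height_eq h hG, hf]; simp
  change height h ≤ _
  have hN0 : (N : ℝ) ≠ 0 := by positivity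
  rw [h6, Finset.card_univ, hcard]
  push_cast
  field_simp
  exact le_rfl

/-- The two shapes of `G` when its element of height `c` has order `p`. -/
def PrimeOrderShape (G : AddSubgroup (ι → UnitAddCircle)) (c p q : ℕ) : Prop :=
  ∃ A : Finset ι, A.card = p * c ∧
    ((Fintype.card ι = p * c + p * q * c ∧ ∃ h ∈ G, ∃ g ∈ G,
        (∀ i ∈ A, h i = ((1 / (p : ℝ) : ℝ) : UnitAddCircle)) ∧ (∀ i ∉ A, h i = 0) ∧
        (∀ i ∈ A, g i = 0) ∧ (∀ i ∉ A, g i = ((1 / (q : ℝ) : ℝ) : UnitAddCircle))) ∨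
     (Fintype.card ι = p * c + (p * q - 1) * c ∧ ∃ g ∈ G,
        (∀ i ∈ A, g i = ((1 / (p * q : ℝ) : ℝ) : UnitAddCircle)) ∧
        (∀ i ∉ A, g i = ((1 / (q : ℝ) : ℝ) : UnitAddCircle))))

/-- If the element `h` of height `c` is a multiple of an element `a` of prime order `p`, then the
multiples of `a` are exactly the elements with heights `0, c, …, (p - 1)c`. -/
lemma prime_order_analysis (H : HasProgressionHeights G c N f) {p : ℕ} (hp : p.Prime)
    {a h : ι → UnitAddCircle} (ha : a ∈ G) (hord : addOrderOf a = p) (hf : f h = 1) {m : ℕ}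
    (hm : h = m • a) :
    (circleSupport a).card = p * c ∧
      (∀ i ∈ circleSupport a, h i = ((1 / (p : ℝ) : ℝ) : UnitAddCircle)) ∧
      (∀ g ∈ G, g ∈ AddSubgroup.zmultiples a ↔ f g < p) := by
  have hpa : p • a = 0 := by rw [← hord]; exact addOrderOf_nsmul_eq_zero a
  have hmul : ∀ u : ℕ, u • a ∈ G := fun u => G.nsmul_mem ha u
  have hsupp : ∀ u : ℕ, ¬ p ∣ u → circleSupport (u • a) = circleSupport a := by
    intro u hu
    ext i
    rw [mem_circleSupport, mem_circleSupport, not_iff_not, Pi.smul_apply]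
    refine ⟨fun h0 => ?_, fun h0 => by rw [h0, smul_zero]⟩
    by_contra hai
    exact nsmul_ne_zero_of_prime hp hai (congrFun hpa i) hu h0
  have hne : ∀ u : ℕ, ¬ p ∣ u → u • a ≠ 0 := by
    intro u hu h0
    rw [← hord] at hu
    exact hu (addOrderOf_dvd_of_nsmul_eq_zero h0)
  have hinj : Set.InjOn (fun u : ℕ => f (u • a)) (Finset.range p) := by
    intro u hu v hv huv
    have := H.inj _ (hmul u) _ (hmul v) huv
    refine nsmul_injOn_Iio_addOrderOf (x := a) ?_ ?_ this <;> simp_all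
  have hp2 := hp.two_le
  obtain ⟨u, hu, hfu⟩ : ∃ u ∈ Finset.range p, p - 1 ≤ f (u • a) := by
    by_contra! hcon
    have := Finset.card_le_card_of_injOn (s := Finset.range p) (t := Finset.range (p - 1))
      (fun u => f (u • a)) (fun u hu => by simpa using hcon u hu) hinj
    simp at this
    omega
  have hu0 : ¬ p ∣ u := by
    intro hd
    rw [Nat.eq_zero_of_dvd_of_lt hd (Finset.mem_range.1 hu), zero_smul, H.apply_zero] at hfu
    omega
  have h1 := H.mul_add_neg (hmul u)
  rw [hsupp u hu0] at h1
  have h2 := H.apply_pos (G.neg_mem (hmul u)) (neg_ne_zero.2 (hne u hu0))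
  have hge : p * c ≤ (circleSupport a).card := by
    rw [← h1, mul_comm]; exact Nat.mul_le_mul_left _ (by omega)
  have hm0 : ¬ p ∣ m := by
    rintro ⟨m', rfl⟩
    rw [hm, mul_comm, mul_smul, hpa, smul_zero, H.apply_zero] at hf
    omega
  have hhG : h ∈ G := hm ▸ hmul m
  have hht : height h = c := by rw [H.height_eq h hhG, hf]; simp
  have hlow : ∀ i ∈ circleSupport a, 1 / (p : ℝ) ≤ unitRep (h i) := by
    intro i hi
    refine one_div_le_unitRep hp.pos ?_ ?_
    · rw [← hsupp m hm0, mem_circleSupport, ← hm] at hi; exact hi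
    · rw [hm, Pi.smul_apply, smul_comm, ← Pi.smul_apply p a i, hpa, Pi.zero_apply, smul_zero]
  have hsum : ∑ i ∈ circleSupport a, unitRep (h i) = c := by
    rw [← hht, height_eq_sum_circleSupport, hm, hsupp m hm0]
  have hp0 : (0 : ℝ) < p := by exact_mod_cast hp.pos
  have hle : (circleSupport a).card ≤ p * c := by
    have := card_mul_le_sum _ _ _ hlow
    rw [hsum, mul_one_div, div_le_iff₀ hp0, mul_comm (c : ℝ)] at this
    exact_mod_cast this
  have hA : (circleSupport a).card = p * c := le_antisymm hle hge
  have hcp := H.pos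
  have hlt : ∀ u : ℕ, f (u • a) < p := by
    intro u
    by_cases hu : p ∣ u
    · obtain ⟨m', rfl⟩ := hu
      rw [mul_comm, mul_smul, hpa, smul_zero, H.apply_zero]
      exact hp.pos
    · have h1 := H.mul_add_neg (hmul u)
      rw [hsupp u hu, hA, mul_comm p] at h1
      have h2 := H.apply_pos (G.neg_mem (hmul u)) (neg_ne_zero.2 (hne u hu))
      have := Nat.eq_of_mul_eq_mul_left hcp h1
      omega
  refine ⟨hA, fun i hi => eq_coe_of_unitRep_eq ?_, fun g hg => ⟨fun hga => ?_, fun hga => ?_⟩⟩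
  · refine eq_of_sum_le_card_mul _ (fun i => unitRep (h i)) _ hlow ?_ i hi
    rw [hsum, hA]
    push_cast
    field_simp
    exact le_rfl
  · have hfin : IsOfFinAddOrder a := addOrderOf_pos_iff.1 (by rw [hord]; exact hp.pos)
    obtain ⟨n, rfl⟩ := (hfin.mem_multiples_iff_mem_zmultiples).2 hga
    exact hlt n
  · have himg : (Finset.range p).image (fun u : ℕ => f (u • a)) = Finset.range p := by
      apply Finset.eq_of_subset_of_card_le
      · intro x hx
        obtain ⟨u, -, rfl⟩ := Finset.mem_image.1 hx
        exact Finset.mem_range.2 (hlt u)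
      · rw [Finset.card_image_of_injOn hinj]
    have : f g ∈ (Finset.range p).image (fun u : ℕ => f (u • a)) := by
      rw [himg]; exact Finset.mem_range.2 hga
    obtain ⟨u, -, hu⟩ := Finset.mem_image.1 this
    rw [← H.inj _ (hmul u) _ hg hu]
    exact AddSubgroup.nsmul_mem_zmultiples a u

lemma primeOrderShape_of_generator {p q : ℕ} (H : HasProgressionHeights G c (p * q) f)
    (hp : p.Prime) (hq : q.Prime) {w h : ι → UnitAddCircle} (hw : w ∈ G)
    (hord : addOrderOf w = p * q) (hgen : ∀ g ∈ G, ∃ n : ℕ, g = n • w) (hf : f h = 1) {m : ℕ}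
    (hm : h = m • (q • w)) : PrimeOrderShape G c p q := by
  classical
  have hqw : q • w ∈ G := G.nsmul_mem hw q
  have horda : addOrderOf (q • w) = p := by
    rw [addOrderOf_nsmul_of_dvd hq.ne_zero (hord ▸ dvd_mul_left q p), hord,
      Nat.mul_div_cancel _ hq.pos]
  obtain ⟨hA, hh, hP⟩ := prime_order_analysis H hp hqw horda hf hm
  set A := circleSupport (q • w) with hAdef
  have hp2 := hp.two_le
  have hq2 := hq.two_le
  have hcp := H.pos
  have hpN : p + 2 ≤ p * q := by nlinarith
  have hw0 := H.generator_apply_ne_zero hgen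
  have hNw : (p * q) • w = 0 := by rw [← hord]; exact addOrderOf_nsmul_eq_zero w
  have hNg : ∀ g ∈ G, (p * q) • g = 0 := by
    intro g hg
    obtain ⟨n, rfl⟩ := hgen g hg
    rw [smul_comm, hNw, smul_zero]
  have hoff : ∀ i ∉ A, q • w i = 0 := by
    intro i hi
    rwa [hAdef, mem_circleSupport, not_not, Pi.smul_apply] at hi
  have hoffG : ∀ g ∈ G, ∀ i ∉ A, q • g i = 0 := by
    intro g hg i hi
    obtain ⟨n, rfl⟩ := hgen g hg
    rw [Pi.smul_apply, smul_comm, hoff i hi, smul_zero]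
  -- elements outside the subgroup of order `p` do not vanish off `A`
  have hoff0 : ∀ g ∈ G, p ≤ f g → ∀ i ∉ A, g i ≠ 0 := by
    intro g hg hgp i hi
    obtain ⟨n, rfl⟩ := hgen g hg
    have hqn : ¬ q ∣ n := by
      rintro ⟨n', rfl⟩
      have : (q * n') • w ∈ AddSubgroup.zmultiples (q • w) := by
        rw [mul_comm, mul_smul]; exact AddSubgroup.nsmul_mem_zmultiples _ n'
      exact absurd ((hP _ hg).1 this) (not_lt.2 hgp)
    exact nsmul_ne_zero_of_prime hq (hw0 i) (hoff i hi) hqn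
  have hoffle : ∀ g ∈ G, p ≤ f g → ∀ i ∈ Aᶜ, 1 / (q : ℝ) ≤ unitRep (g i) := by
    intro g hg hgp i hi
    rw [Finset.mem_compl] at hi
    exact one_div_le_unitRep hq.pos (hoff0 g hg hgp i hi) (hoffG g hg i hi)
  obtain ⟨g, hg, hgf⟩ := H.surj (p * q - 1) (by omega)
  have hgneg : p ≤ f (-g) := by
    by_contra! hlt
    have h1 := (hP _ (G.neg_mem hg)).2 hlt
    have h2 := (hP _ hg).1 (by simpa using AddSubgroup.neg_mem _ h1)
    omega
  have hgsupp := H.mul_add_neg hg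
  have hgcard : (circleSupport g).card ≤ Fintype.card ι := Finset.card_le_univ _
  obtain ⟨e, heG, hef⟩ := H.surj p (by omega)
  have hesum : ∑ i ∈ A, unitRep (e i) + ∑ i ∈ Aᶜ, unitRep (e i) = c * p := by
    rw [Finset.sum_add_sum_compl, ← hef, ← H.height_eq e heG, height]
  have hAc : A.card + (Aᶜ).card = Fintype.card ι := Finset.card_add_card_compl A
  have hq0 : (0 : ℝ) < q := by exact_mod_cast hq.pos
  have hp0 : (0 : ℝ) < p := by exact_mod_cast hp.pos
  have hlow := card_mul_le_sum _ _ _ (hoffle e heG hef.ge)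
  have hA0 : 0 ≤ ∑ i ∈ A, unitRep (e i) := Finset.sum_nonneg fun i _ => unitRep_nonneg _
  have hupper : (Aᶜ).card ≤ c * (p * q) := by
    have : ((Aᶜ).card : ℝ) * (1 / q) ≤ c * p := by linarith
    rw [mul_one_div, div_le_iff₀ hq0, mul_assoc] at this
    exact_mod_cast this
  have hwsupp : circleSupport w = Finset.univ := by ext i; simp [mem_circleSupport, hw0 i]
  have hwcard := H.mul_add_neg hw
  rw [hwsupp, Finset.card_univ] at hwcard
  set t := f w + f (-w)
  have ht1 : p * q - 1 + p ≤ t := by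
    refine Nat.le_of_mul_le_mul_left ?_ hcp
    rw [hwcard]
    refine le_trans (Nat.mul_le_mul_left c ?_) (hgsupp ▸ hgcard)
    omega
  have ht2 : t ≤ p * q + p := by
    refine Nat.le_of_mul_le_mul_left ?_ hcp
    rw [hwcard, ← hAc, hA]
    nlinarith
  refine ⟨A, hA, ?_⟩
  rcases Nat.lt_or_ge t (p * q + p) with ht | ht
  · have htt : t = p + (p * q - 1) := by omega
    have hcard : Fintype.card ι = p * c + (p * q - 1) * c := by
      rw [← hwcard, htt]; ring
    have hge : f (-g) = p := by
      refine le_antisymm ?_ hgneg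
      have : f g + f (-g) ≤ t := by
        refine Nat.le_of_mul_le_mul_left ?_ hcp
        rw [hwcard, hgsupp]; exact hgcard
      omega
    have heg : e = -g := H.inj _ heG _ (G.neg_mem hg) (hef.trans hge.symm)
    have hfull : ∀ i, e i ≠ 0 := by
      have : circleSupport e = Finset.univ := by
        rw [heg, circleSupport_neg, ← Finset.card_eq_iff_eq_univ, ← hgsupp, ← hwcard, htt, hge, hgf,
          add_comm]
      intro i
      rw [← mem_circleSupport, this]
      exact Finset.mem_univ i
    have hAle : ∀ i ∈ A, 1 / ((p * q : ℕ) : ℝ) ≤ unitRep (e i) := fun i _ =>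
      one_div_le_unitRep (by positivity) (hfull i) (congrFun (hNg e heG) i)
    have hAlow := card_mul_le_sum _ _ _ hAle
    have hAccard : (Aᶜ).card = (p * q - 1) * c := by omega
    have hsub : (((p * q - 1 : ℕ)) : ℝ) = p * q - 1 := by
      rw [Nat.cast_sub (by omega)]; push_cast; ring
    have hid1 : ((A.card : ℕ) : ℝ) * (1 / ((p * q : ℕ) : ℝ)) = c / q := by
      rw [hA]; push_cast; field_simp
    have hid2 : (((Aᶜ).card : ℕ) : ℝ) * (1 / (q : ℝ)) = c * p - c / q := by
      rw [hAccard, Nat.cast_mul, hsub]; field_simp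
    refine Or.inr ⟨hcard, e, heG, fun i hi => eq_coe_of_unitRep_eq ?_,
      fun i hi => eq_coe_of_unitRep_eq ?_⟩
    · rw [← Nat.cast_mul]
      refine eq_of_sum_le_card_mul _ (fun i => unitRep (e i)) _ hAle ?_ i hi
      linarith
    · refine eq_of_sum_le_card_mul _ (fun i => unitRep (e i)) _ (hoffle e heG hef.ge) ?_ i
        (Finset.mem_compl.2 hi)
      linarith
  · have htt : t = p + p * q := by omega
    have hcard : Fintype.card ι = p * c + p * q * c := by
      rw [← hwcard, htt]; ring
    have hAccard : (Aᶜ).card = p * q * c := by omega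
    have hid2 : (((Aᶜ).card : ℕ) : ℝ) * (1 / (q : ℝ)) = c * p := by
      rw [hAccard]; push_cast; field_simp
    have hzero : ∑ i ∈ A, unitRep (e i) = 0 := by linarith
    refine Or.inl ⟨hcard, h, hm ▸ G.nsmul_mem hqw m, e, heG, hh, fun i hi => ?_, fun i hi => ?_,
      fun i hi => eq_coe_of_unitRep_eq ?_⟩
    · rw [hm, Pi.smul_apply, Pi.smul_apply, hoff i hi, smul_zero]
    · exact (unitRep_eq_zero_iff _).1
        ((Finset.sum_eq_zero_iff_of_nonneg fun i _ => unitRep_nonneg (e i)).1 hzero i hi)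
    · refine eq_of_sum_le_card_mul _ (fun i => unitRep (e i)) _ (hoffle e heG hef.ge) ?_ i
        (Finset.mem_compl.2 hi)
      linarith

/-- The classification of the finite subgroups of `(ℝ / ℤ)^ι` with heights
`0, c, 2c, …, (pq - 1)c`. -/
theorem HasProgressionHeights.classification {p q : ℕ}
    (H : HasProgressionHeights G c (p * q) f) (hp : p.Prime) (hq : q.Prime) (hpq : p ≠ q) :
    (Fintype.card ι = p * q * c ∧
      ∃ h ∈ G, ∀ i, h i = ((1 / (p * q : ℝ) : ℝ) : UnitAddCircle)) ∨
    PrimeOrderShape G c p q ∨ PrimeOrderShape G c q p := by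
  have hp2 := hp.two_le
  have hq2 := hq.two_le
  have hN : 2 ≤ p * q := by nlinarith
  obtain ⟨w, hw, hord, hgen⟩ := exists_generator G hp hq hpq H.card
  obtain ⟨h, hh, hf⟩ := H.surj 1 (by omega)
  obtain ⟨n, hn⟩ := hgen h hh
  by_cases hqn : q ∣ n
  · obtain ⟨m, rfl⟩ := hqn
    rw [mul_comm, mul_smul] at hn
    exact Or.inr (Or.inl (primeOrderShape_of_generator H hp hq hw hord hgen hf hn))
  by_cases hpn : p ∣ n
  · obtain ⟨m, rfl⟩ := hpn
    rw [mul_comm, mul_smul] at hn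
    rw [mul_comm] at H hord
    exact Or.inr (Or.inr (primeOrderShape_of_generator H hq hp hw hord hgen hf hn))
  · have hNw : (p * q) • w = 0 := by rw [← hord]; exact addOrderOf_nsmul_eq_zero w
    have hcop : n.Coprime (p * q) :=
      Nat.Coprime.mul_right ((hp.coprime_iff_not_dvd.2 hpn).symm)
        ((hq.coprime_iff_not_dvd.2 hqn).symm)
    have := all_coordinates_eq H hN hh hf
      (fun i => by
        rw [hn]
        exact coprime_nsmul_ne_zero (H.generator_apply_ne_zero hgen i) (congrFun hNw i) hcop)
      (by rw [hn, smul_comm, hNw, smul_zero])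
    refine Or.inl ⟨this.1, h, hh, fun i => ?_⟩
    rw [this.2 i, Nat.cast_mul]

end Core

section LatticeGroup

variable {d : ℕ}

/-- The points of `(ℝ / ℤ)^(d+1)` represented by the coefficient vectors `x` with `∑ x_i` an
integer and `∑ x_i V_i` a lattice point. -/
def latticeGroup (V : Fin (d+1) → Fin d → ℤ) : AddSubgroup (Fin (d+1) → UnitAddCircle) where
  carrier := {g | ∑ i, g i = 0 ∧ ∀ j, ∑ i, V i j • g i = 0}
  zero_mem' := by simp
  add_mem' := by
    rintro a b ⟨ha, ha'⟩ ⟨hb, hb'⟩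
    refine ⟨by simp [Finset.sum_add_distrib, ha, hb], fun j => ?_⟩
    simp [Finset.sum_add_distrib, ha' j, hb' j]
  neg_mem' := by
    rintro a ⟨ha, ha'⟩
    refine ⟨by simp [ha], fun j => ?_⟩
    simp [ha' j]

lemma mem_latticeGroup (V : Fin (d+1) → Fin d → ℤ) (g : Fin (d+1) → UnitAddCircle) :
    g ∈ latticeGroup V ↔ ∑ i, g i = 0 ∧ ∀ j, ∑ i, V i j • g i = 0 := Iff.rfl

lemma coe_sum_unit {α : Type*} (s : Finset α) (x : α → ℝ) :
    ((∑ i ∈ s, x i : ℝ) : UnitAddCircle) = ∑ i ∈ s, (x i : UnitAddCircle) :=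
  map_sum (QuotientAddGroup.mk' (AddSubgroup.zmultiples (1 : ℝ))) x s

lemma coe_mem_latticeGroup (V : Fin (d+1) → Fin d → ℤ) (x : Fin (d+1) → ℝ) :
    (fun i => (x i : UnitAddCircle)) ∈ latticeGroup V ↔
      (∃ n : ℤ, (n : ℝ) = ∑ i, x i) ∧ ∀ j, ∃ n : ℤ, (n : ℝ) = ∑ i, x i * V i j := by
  rw [mem_latticeGroup, ← coe_sum_unit, coe_unit_eq_zero_iff]
  refine and_congr Iff.rfl (forall_congr' fun j => ?_)
  rw [← coe_unit_eq_zero_iff, coe_sum_unit]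
  have : ∀ i, V i j • (x i : UnitAddCircle) = ((x i * V i j : ℝ) : UnitAddCircle) := by
    intro i
    rw [← AddCircle.coe_zsmul, zsmul_eq_mul, mul_comm]
  simp_rw [this]

/-- The matrix with rows `(1, V_i)`. -/
def homogeneousMatrix (V : Fin (d+1) → Fin d → ℤ) : Matrix (Fin (d+1)) (Fin (d+1)) ℝ :=
  Matrix.of fun i => Fin.cons 1 fun j => (V i j : ℝ)

lemma vecMul_homogeneousMatrix_zero (V : Fin (d+1) → Fin d → ℤ) (x : Fin (d+1) → ℝ) :
    Matrix.vecMul x (homogeneousMatrix V) 0 = ∑ i, x i := by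
  simp [Matrix.vecMul, dotProduct, homogeneousMatrix]

lemma vecMul_homogeneousMatrix_succ (V : Fin (d+1) → Fin d → ℤ) (x : Fin (d+1) → ℝ) (j : Fin d) :
    Matrix.vecMul x (homogeneousMatrix V) j.succ = ∑ i, x i * V i j := by
  simp [Matrix.vecMul, dotProduct, homogeneousMatrix]

lemma coe_mem_latticeGroup_iff_vecMul (V : Fin (d+1) → Fin d → ℤ) (x : Fin (d+1) → ℝ) :
    (fun i => (x i : UnitAddCircle)) ∈ latticeGroup V ↔
      ∀ k, ∃ n : ℤ, (n : ℝ) = Matrix.vecMul x (homogeneousMatrix V) k := by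
  rw [coe_mem_latticeGroup, Fin.forall_fin_succ, vecMul_homogeneousMatrix_zero]
  simp_rw [vecMul_homogeneousMatrix_succ]

lemma det_homogeneousMatrix_ne_zero {V : Fin (d+1) → Fin d → ℤ}
    (hV : AffineIndependent ℝ (fun i => (fun j => ((V i j : ℤ) : ℝ)))) :
    (homogeneousMatrix V).det ≠ 0 := by
  rw [Ne, ← Matrix.exists_vecMul_eq_zero_iff]
  rintro ⟨x, hx0, hx⟩
  have h0 := congrFun hx 0
  rw [vecMul_homogeneousMatrix_zero] at h0
  refine hx0 (funext fun i => affineIndependent_iff.1 hV Finset.univ x h0 ?_ i (Finset.mem_univ i))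
  ext j
  have hj := congrFun hx j.succ
  rw [vecMul_homogeneousMatrix_succ] at hj
  simpa using hj

lemma image_convexHull_vecMul_add (A : Matrix (Fin d) (Fin d) ℝ) (b : Fin d → ℝ)
    (S : Set (Fin d → ℝ)) :
    (fun x : Fin d → ℝ => Matrix.vecMul x A + b) '' convexHull ℝ S =
      convexHull ℝ ((fun x : Fin d → ℝ => Matrix.vecMul x A + b) '' S) := by
  let F : (Fin d → ℝ) →ᵃ[ℝ] (Fin d → ℝ) :=
    (Matrix.vecMulLinear A).toAffineMap + AffineMap.const ℝ (Fin d → ℝ) b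
  exact F.image_convexHull S

lemma integral_inv_mul {V V' : Fin (d+1) → Fin d → ℤ} (hV : (homogeneousMatrix V).det ≠ 0)
    (h : latticeGroup V ≤ latticeGroup V') (k l : Fin (d+1)) :
    ∃ n : ℤ, (n : ℝ) = ((homogeneousMatrix V)⁻¹ * homogeneousMatrix V') k l := by
  have hu : IsUnit (homogeneousMatrix V).det := isUnit_iff_ne_zero.2 hV
  have hmem : (fun i => ((homogeneousMatrix V)⁻¹ k i : UnitAddCircle)) ∈ latticeGroup V := by
    rw [coe_mem_latticeGroup_iff_vecMul]
    intro j
    refine ⟨(1 : Matrix (Fin (d+1)) (Fin (d+1)) ℤ) k j, ?_⟩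
    have h1 : ((homogeneousMatrix V)⁻¹ * homogeneousMatrix V) k j =
        (1 : Matrix (Fin (d+1)) (Fin (d+1)) ℝ) k j := by
      rw [Matrix.nonsing_inv_mul _ hu]
    rw [Matrix.mul_apply_eq_vecMul] at h1
    refine Eq.trans ?_ h1.symm
    by_cases hkj : k = j <;> simp [Matrix.one_apply, hkj]
  have := (coe_mem_latticeGroup_iff_vecMul V' _).1 (h hmem) l
  rwa [Matrix.mul_apply_eq_vecMul]

/-- Lattice simplices with the same lattice group are unimodularly equivalent. -/
theorem unimodEquiv_of_latticeGroup_eq {V V' : Fin (d+1) → Fin d → ℤ}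
    (hV : AffineIndependent ℝ (fun i => (fun j => ((V i j : ℤ) : ℝ))))
    (h : latticeGroup V = latticeGroup V') :
    UnimodEquiv (convexHull ℝ (Set.range fun i => (fun j => ((V i j : ℤ) : ℝ))))
      (convexHull ℝ (Set.range fun i => (fun j => ((V' i j : ℤ) : ℝ)))) := by
  have hdet := det_homogeneousMatrix_ne_zero hV
  have hdet' : (homogeneousMatrix V').det ≠ 0 := by
    rw [Ne, ← Matrix.exists_vecMul_eq_zero_iff]
    rintro ⟨x, hx0, hx⟩
    have hx1 : Matrix.vecMul x (homogeneousMatrix V) ≠ 0 := fun h0 =>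
      hdet (Matrix.exists_vecMul_eq_zero_iff.1 ⟨x, hx0, h0⟩)
    obtain ⟨k, hk⟩ := Function.ne_iff.1 hx1
    rw [Pi.zero_apply] at hk
    set y := Matrix.vecMul x (homogeneousMatrix V) k with hy
    have hmem : (fun i => ((((1 / (2 * y)) • x) i : ℝ) : UnitAddCircle)) ∈ latticeGroup V := by
      rw [h, coe_mem_latticeGroup_iff_vecMul]
      intro j
      exact ⟨0, by rw [Matrix.smul_vecMul, hx]; simp⟩
    obtain ⟨n, hn⟩ := (coe_mem_latticeGroup_iff_vecMul V _).1 hmem k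
    rw [Matrix.smul_vecMul, Pi.smul_apply, ← hy, smul_eq_mul] at hn
    have h2 : (2 * n : ℝ) = 1 := by rw [hn]; field_simp
    have h3 : 2 * n = 1 := by exact_mod_cast h2
    omega
  set M := homogeneousMatrix V
  set M' := homogeneousMatrix V'
  have hu : IsUnit M.det := isUnit_iff_ne_zero.2 hdet
  have hu' : IsUnit M'.det := isUnit_iff_ne_zero.2 hdet'
  choose W hW using integral_inv_mul hdet h.le
  choose W' hW' using integral_inv_mul hdet' h.ge
  have hWm : (Matrix.of W).map (fun a : ℤ => (a : ℝ)) = M⁻¹ * M' := by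
    ext k l; exact hW k l
  have hWm' : (Matrix.of W').map (fun a : ℤ => (a : ℝ)) = M'⁻¹ * M := by
    ext k l; exact hW' k l
  have hWW' : Matrix.of W * Matrix.of W' = 1 := by
    apply Matrix.map_injective (f := fun a : ℤ => (a : ℝ)) Int.cast_injective
    beta_reduce
    have : (Matrix.of W * Matrix.of W').map (fun a : ℤ => (a : ℝ)) =
        (Matrix.of W).map (fun a : ℤ => (a : ℝ)) * (Matrix.of W').map (fun a : ℤ => (a : ℝ)) :=
      Matrix.map_mul (f := Int.castRingHom ℝ)
    rw [this, hWm, hWm', Matrix.mul_assoc, ← Matrix.mul_assoc M', Matrix.mul_nonsing_inv _ hu',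
      Matrix.one_mul, Matrix.nonsing_inv_mul _ hu]
    exact (Matrix.map_one (fun a : ℤ => (a : ℝ)) Int.cast_zero Int.cast_one).symm
  have hWdet : IsUnit (Matrix.of W).det := by
    refine IsUnit.of_mul_eq_one (Matrix.of W').det ?_
    rw [← Matrix.det_mul, hWW', Matrix.det_one]
  have hcol : ∀ k, W k 0 = (1 : Matrix (Fin (d+1)) (Fin (d+1)) ℤ) k 0 := by
    intro k
    have h1 : (M⁻¹ * M') k 0 = (M⁻¹ * M) k 0 := by
      simp [Matrix.mul_apply, M, M', homogeneousMatrix]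
    rw [← hW, Matrix.nonsing_inv_mul _ hu] at h1
    have h2 : ((W k 0 : ℤ) : ℝ) = (((1 : Matrix (Fin (d+1)) (Fin (d+1)) ℤ) k 0 : ℤ) : ℝ) := by
      rw [h1]
      by_cases hk : k = 0 <;> simp [Matrix.one_apply, hk]
    exact_mod_cast h2
  refine ⟨(Matrix.of W).submatrix Fin.succ Fin.succ, fun j => W 0 j.succ, ?_, ?_⟩
  · rw [Matrix.det_succ_column_zero, Fin.sum_univ_succ] at hWdet
    simpa [hcol, Matrix.one_apply] using hWdet
  · rw [image_convexHull_vecMul_add, ← Set.range_comp]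
    congr 2
    funext i
    ext j
    have h1 : M' i j.succ = (M * (Matrix.of W).map (fun a : ℤ => (a : ℝ))) i j.succ := by
      rw [hWm, ← Matrix.mul_assoc, Matrix.mul_nonsing_inv _ hu, Matrix.one_mul]
    rw [Matrix.mul_apply, Fin.sum_univ_succ] at h1
    simp only [M, M', homogeneousMatrix, Matrix.of_apply, Fin.cons_succ, Fin.cons_zero,
      Matrix.map_apply, one_mul] at h1
    rw [h1, add_comm]
    simp [Matrix.vecMul, dotProduct]

end LatticeGroup

section Counting

variable {d : ℕ}

lemma mem_smul_convexHull_iff (V : Fin (d+1) → Fin d → ℤ) (n : ℕ) (x : Fin d → ℝ) :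
    x ∈ (n : ℝ) • convexHull ℝ (Set.range fun i => (fun j => ((V i j : ℤ) : ℝ))) ↔
      ∃ y : Fin (d+1) → ℝ, (∀ i, 0 ≤ y i) ∧ ∑ i, y i = n ∧ ∀ j, ∑ i, y i * V i j = x j := by
  set L := Matrix.vecMulLinear (Matrix.of fun i j => ((V i j : ℤ) : ℝ)) with hL
  have hLy : ∀ y j, L y j = ∑ i, y i * V i j := by
    intro y j; simp [hL, Matrix.vecMul, dotProduct]
  have hrange : Set.range (fun i => (fun j => ((V i j : ℤ) : ℝ))) =
      L '' Set.range fun i j : Fin (d+1) => if i = j then (1 : ℝ) else 0 := by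
    rw [← Set.range_comp]
    congr 1
    funext i j
    simp [hLy]
  rw [hrange, ← L.image_convexHull, convexHull_basis_eq_stdSimplex, Set.mem_smul_set]
  constructor
  · rintro ⟨_, ⟨w, ⟨hw0, hw1⟩, rfl⟩, rfl⟩
    refine ⟨(n : ℝ) • w, fun i => mul_nonneg n.cast_nonneg (hw0 i), ?_, fun j => ?_⟩
    · simp [← Finset.mul_sum, hw1]
    · rw [← hLy, map_smul]
  · rintro ⟨y, hy0, hyn, hyx⟩
    have hx : L y = x := funext fun j => (hLy y j).trans (hyx j)
    rcases Nat.eq_zero_or_pos n with rfl | hn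
    · have hy : y = 0 := by
        rw [Nat.cast_zero, Finset.sum_eq_zero_iff_of_nonneg fun i _ => hy0 i] at hyn
        exact funext fun i => hyn i (Finset.mem_univ i)
      refine ⟨_, ⟨Pi.single 0 1, single_mem_stdSimplex ℝ 0, rfl⟩, ?_⟩
      rw [← hx, hy]; simp
    · have hn' : (n : ℝ) ≠ 0 := by positivity
      refine ⟨_, ⟨(n : ℝ)⁻¹ • y, ⟨fun i => mul_nonneg (by positivity) (hy0 i), ?_⟩, rfl⟩, ?_⟩
      · simp only [Pi.smul_apply, smul_eq_mul, ← Finset.mul_sum, hyn]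
        exact inv_mul_cancel₀ hn'
      · rw [map_smul, smul_inv_smul₀ hn', hx]

/-- Pairs of a group element and a vector of naturals of total height `n`. -/
def heightSlice {ι : Type*} [Fintype ι] (G : AddSubgroup (ι → UnitAddCircle)) (n : ℕ) :
    Set ((ι → UnitAddCircle) × (ι → ℕ)) :=
  {t | t.1 ∈ G ∧ height t.1 + ∑ i, (t.2 i : ℝ) = n}

lemma coe_unitRep_add_natCast (x : UnitAddCircle) (m : ℕ) :
    ((unitRep x + m : ℝ) : UnitAddCircle) = x := by
  rw [AddCircle.coe_add, coe_unitRep, (coe_unit_eq_zero_iff (m : ℝ)).2 ⟨m, by simp⟩, add_zero]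

lemma latticePointCount_smul_eq_ncard {V : Fin (d+1) → Fin d → ℤ}
    (hV : AffineIndependent ℝ (fun i => (fun j => ((V i j : ℤ) : ℝ)))) (n : ℕ) :
    latticePointCount
      ((n : ℝ) • convexHull ℝ (Set.range fun i => (fun j => ((V i j : ℤ) : ℝ)))) =
      (heightSlice (latticeGroup V) n).ncard := by
  let F : ((Fin (d+1) → UnitAddCircle) × (Fin (d+1) → ℕ)) → Fin d → ℝ :=
    fun t j => ∑ i, (unitRep (t.1 i) + t.2 i) * V i j
  have hF : Set.InjOn F (heightSlice (latticeGroup V) n) := by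
    rintro ⟨g, m⟩ ⟨-, hgm⟩ ⟨g', m'⟩ ⟨-, hgm'⟩ he
    have hy : ∀ i, unitRep (g i) + m i - (unitRep (g' i) + m' i) = 0 := by
      intro i
      refine affineIndependent_iff.1 hV Finset.univ
        (fun i => unitRep (g i) + m i - (unitRep (g' i) + m' i)) ?_ ?_ i (Finset.mem_univ i)
      · simp only [height] at hgm hgm'
        rw [Finset.sum_sub_distrib, Finset.sum_add_distrib, Finset.sum_add_distrib, hgm, hgm',
          sub_self]
      · ext j
        have := congrFun he j
        simp only [F] at this
        simp [sub_mul, this]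
    have hg : g = g' := by
      funext i
      rw [← coe_unitRep_add_natCast (g i) (m i), sub_eq_zero.1 (hy i), coe_unitRep_add_natCast]
    subst hg
    refine Prod.ext rfl (funext fun i => ?_)
    have := hy i
    have h2 : (m i : ℝ) = m' i := by linarith
    exact_mod_cast h2
  have hcast : Function.Injective (fun (x : Fin d → ℤ) (j : Fin d) => ((x j : ℤ) : ℝ)) := by
    intro x y h
    funext j
    exact Int.cast_injective (α := ℝ) (congrFun h j)
  rw [latticePointCount, ← Set.ncard_image_of_injective _ hcast, ← hF.ncard_image]
  congr 1
  ext x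
  constructor
  · rintro ⟨z, hz, rfl⟩
    obtain ⟨y, hy0, hyn, hyz⟩ := (mem_smul_convexHull_iff V n _).1 hz
    have hy : ∀ i, unitRep (y i : UnitAddCircle) + (⌊y i⌋₊ : ℝ) = y i := by
      intro i
      rw [unitRep_coe, natCast_floor_eq_intCast_floor (hy0 i), Int.fract_add_floor]
    refine ⟨(fun i => (y i : UnitAddCircle), fun i => ⌊y i⌋₊), ⟨?_, ?_⟩, ?_⟩
    · rw [coe_mem_latticeGroup]
      exact ⟨⟨n, by rw [hyn]; simp⟩, fun j => ⟨z j, (hyz j).symm⟩⟩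
    · simp only [height]
      rw [← Finset.sum_add_distrib, ← hyn]
      exact Finset.sum_congr rfl fun i _ => hy i
    · funext j
      simp only [F, hy, hyz]
  · rintro ⟨⟨g, m⟩, ⟨hg, hgm⟩, rfl⟩
    have hmem : (fun i => ((unitRep (g i) + m i : ℝ) : UnitAddCircle)) ∈ latticeGroup V := by
      simp_rw [coe_unitRep_add_natCast]; exact hg
    choose z hz using ((coe_mem_latticeGroup V _).1 hmem).2
    refine ⟨z, ?_, funext hz⟩
    rw [Set.mem_ofPred_eq, mem_smul_convexHull_iff]
    refine ⟨fun i => unitRep (g i) + m i, fun i => ?_, ?_, fun j => (hz j).symm⟩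
    · exact add_nonneg (unitRep_nonneg _) (Nat.cast_nonneg _)
    · rw [Finset.sum_add_distrib]; exact hgm

end Counting

section HeightSlices

lemma card_piAntidiag_fin (d n : ℕ) :
    (Finset.piAntidiag (Finset.univ : Finset (Fin (d+1))) n).card = (n + d).choose d := by
  rw [← Fintype.card_coe, ← Fintype.card_congr
    ((Sym.equivNatSumOfFintype (Fin (d+1)) n).trans
      (Equiv.subtypeEquivRight fun P => by simp)), Sym.card_sym_eq_choose, Fintype.card_fin,
    show d + 1 + n - 1 = n + d by omega, Nat.choose_symm_add]

lemma sum_choose_eq_sum_range {α : Type*} (s : Finset α) (φ : α → ℕ) (d n : ℕ) :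
    ∑ a ∈ s, (if φ a ≤ n then (n - φ a + d).choose d else 0) =
      ∑ m ∈ Finset.range (n+1), (s.filter fun a => φ a = m).card * (n - m + d).choose d := by
  rw [← Finset.sum_filter, ← Finset.sum_fiberwise_of_maps_to (g := φ) (t := Finset.range (n+1))
    (by intro a ha; rw [Finset.mem_filter] at ha; rw [Finset.mem_range]; omega)]
  refine Finset.sum_congr rfl fun m hm => ?_
  rw [Finset.mem_range] at hm
  rw [Finset.filter_filter, Finset.card_eq_sum_ones, Finset.sum_mul]
  refine Finset.sum_congr ?_ ?_
  · ext a; simp only [Finset.mem_filter]; constructor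
    · rintro ⟨h1, -, h2⟩; exact ⟨h1, h2⟩
    · rintro ⟨h1, h2⟩; exact ⟨h1, by omega, h2⟩
  · intro a ha
    rw [(Finset.mem_filter.1 ha).2, one_mul]

lemma card_fiber_eq_of_sum_choose_eq {α β : Type*} {s : Finset α} {t : Finset β} {φ : α → ℕ}
    {ψ : β → ℕ} {d : ℕ}
    (h : ∀ n, ∑ a ∈ s, (if φ a ≤ n then (n - φ a + d).choose d else 0) =
      ∑ b ∈ t, (if ψ b ≤ n then (n - ψ b + d).choose d else 0)) (n : ℕ) :
    (s.filter fun a => φ a = n).card = (t.filter fun b => ψ b = n).card := by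
  induction n using Nat.strong_induction_on with
  | _ n ih =>
    have hn := h n
    rw [sum_choose_eq_sum_range, sum_choose_eq_sum_range, Finset.sum_range_succ,
      Finset.sum_range_succ, Finset.sum_congr rfl fun m hm => by
        rw [ih m (Finset.mem_range.1 hm)]] at hn
    simpa using hn

variable {d : ℕ} {G : AddSubgroup (Fin (d+1) → UnitAddCircle)}

lemma height_nonneg {ι : Type*} [Fintype ι] (g : ι → UnitAddCircle) : 0 ≤ height g :=
  Finset.sum_nonneg fun _ _ => unitRep_nonneg _

lemma height_le_card {ι : Type*} [Fintype ι] (g : ι → UnitAddCircle) :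
    height g ≤ Fintype.card ι := by
  rw [height, Fintype.card, Finset.card_eq_sum_ones, Nat.cast_sum]
  exact Finset.sum_le_sum fun i _ => by simpa using (unitRep_lt_one (g i)).le

lemma exists_height_eq_natCast {V : Fin (d+1) → Fin d → ℤ} {g : Fin (d+1) → UnitAddCircle}
    (hg : g ∈ latticeGroup V) : ∃ n : ℕ, height g = n := by
  have h := hg.1
  have h1 : ((height g : ℝ) : UnitAddCircle) = 0 := by
    rw [height, coe_sum_unit]
    simpa [coe_unitRep] using h
  obtain ⟨n, hn⟩ := (coe_unit_eq_zero_iff _).1 h1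
  have h0 : (0 : ℝ) ≤ n := hn ▸ height_nonneg g
  refine ⟨n.toNat, ?_⟩
  rw [← hn]
  have : ((n.toNat : ℤ) : ℝ) = n := by rw [Int.toNat_of_nonneg (by exact_mod_cast h0)]
  exact_mod_cast this.symm

lemma finite_of_finite_heightSlice (hfin : ∀ n, (heightSlice G n).Finite)
    (hint : ∀ g ∈ G, ∃ n : ℕ, height g = n) : (G : Set (Fin (d+1) → UnitAddCircle)).Finite := by
  refine ((hfin (d+1)).image Prod.fst).subset fun g hg => ?_
  obtain ⟨n, hn⟩ := hint g hg
  have hle := height_le_card g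
  rw [hn, Fintype.card_fin] at hle
  have hle' : n ≤ d + 1 := by exact_mod_cast hle
  refine ⟨(g, Pi.single 0 (d + 1 - n)), ⟨hg, ?_⟩, rfl⟩
  have : ∑ i, (((Pi.single 0 (d + 1 - n) : Fin (d+1) → ℕ) i : ℕ) : ℝ) = ((d + 1 - n : ℕ) : ℝ) := by
    rw [← Nat.cast_sum, Finset.sum_pi_single']; simp
  rw [this, hn]
  exact_mod_cast (by omega : n + (d + 1 - n) = d + 1)

lemma ncard_heightSlice (hfin : ∀ n, (heightSlice G n).Finite)
    {S : Finset (Fin (d+1) → UnitAddCircle)} (hS : ∀ g, g ∈ S ↔ g ∈ G)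
    {φ : (Fin (d+1) → UnitAddCircle) → ℕ} (hφ : ∀ g ∈ G, height g = φ g) (n : ℕ) :
    (heightSlice G n).ncard = ∑ g ∈ S, if φ g ≤ n then (n - φ g + d).choose d else 0 := by
  classical
  have hmem : ∀ t, t ∈ (hfin n).toFinset ↔ t.1 ∈ G ∧ φ t.1 + ∑ i, t.2 i = n := by
    intro t
    rw [Set.Finite.mem_toFinset]
    refine and_congr_right fun ht => ?_
    rw [hφ _ ht]
    exact_mod_cast Iff.rfl
  rw [Set.ncard_eq_toFinset_card _ (hfin n), Finset.card_eq_sum_card_fiberwise (f := Prod.fst)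
    (t := S) (fun t ht => (hS _).2 ((hmem t).1 ht).1)]
  refine Finset.sum_congr rfl fun g hg => ?_
  split_ifs with hle
  · rw [← card_piAntidiag_fin]
    refine (congrArg Finset.card ?_).trans (Finset.card_map (⟨Prod.mk g,
      Prod.mk_right_injective g⟩ : (Fin (d+1) → ℕ) ↪ (Fin (d+1) → UnitAddCircle) × _))
    ext ⟨g', m⟩
    simp only [Finset.mem_filter, hmem, Finset.mem_map, Finset.mem_piAntidiag,
      Function.Embedding.coeFn_mk, Prod.mk.injEq]
    constructor
    · rintro ⟨⟨h1, h2⟩, rfl⟩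
      have h2' : φ g' + Finset.univ.sum m = n := h2
      exact ⟨m, ⟨by omega, by simp⟩, rfl, rfl⟩
    · rintro ⟨m', ⟨h1, -⟩, rfl, rfl⟩
      have h1' : φ g + Finset.univ.sum m' = n := by omega
      exact ⟨⟨(hS _).1 hg, h1'⟩, rfl⟩
  · rw [Finset.card_eq_zero, Finset.filter_eq_empty_iff]
    rintro t ht rfl
    have := ((hmem t).1 ht).2
    omega

/-- A lattice simplex with `δ`-polynomial `1 + t^c + ⋯ + t^((N-1)c)` has a lattice group of order
`N`, whose heights are in arithmetic progression. -/
theorem card_and_exists_hasProgressionHeights {V : Fin (d+1) → Fin d → ℤ} {k N : ℕ} (hN : 0 < N)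
    (hV : AffineIndependent ℝ (fun i => (fun j => ((V i j : ℤ) : ℝ))))
    (hδ : HasDeltaPolySimplex d N k
      (convexHull ℝ (Set.range fun i => (fun j => ((V i j : ℤ) : ℝ))))) :
    Nat.card (latticeGroup V) = N ∧ ((∀ i, ∃ g ∈ latticeGroup V, g i ≠ 0) →
      ∃ f, HasProgressionHeights (latticeGroup V) (k+1) N f) := by
  classical
  have hcount : ∀ n, (heightSlice (latticeGroup V) n).ncard = ∑ j ∈ Finset.range N,
      if j * (k+1) ≤ n then Nat.choose (n - j * (k+1) + d) d else 0 := fun n =>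
    (latticePointCount_smul_eq_ncard hV n).symm.trans (hδ n)
  have hfin : ∀ n, (heightSlice (latticeGroup V) n).Finite := by
    intro n
    refine Set.finite_of_ncard_ne_zero (ne_of_gt ?_)
    rw [hcount]
    refine Finset.sum_pos' (fun _ _ => Nat.zero_le _) ⟨0, Finset.mem_range.2 hN, ?_⟩
    simpa using Nat.choose_pos (by omega)
  have hint : ∀ g ∈ latticeGroup V, ∃ n : ℕ, height g = n := fun g hg =>
    exists_height_eq_natCast hg
  have hG := finite_of_finite_heightSlice hfin hint
  choose! φ hφ using hint
  have hS : ∀ g, g ∈ hG.toFinset ↔ g ∈ latticeGroup V := fun g => hG.mem_toFinset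
  have hfib := card_fiber_eq_of_sum_choose_eq (s := hG.toFinset) (t := Finset.range N) (φ := φ)
    (ψ := fun j => j * (k+1)) (d := d)
    (fun n => (ncard_heightSlice hfin hS hφ n).symm.trans (hcount n))
  have hfib1 : ∀ j < N, (hG.toFinset.filter fun g => φ g = j * (k+1)).card = 1 := by
    intro j hj
    rw [hfib, Finset.card_eq_one]
    refine ⟨j, ?_⟩
    ext i
    simp only [Finset.mem_filter, Finset.mem_range, Finset.mem_singleton]
    constructor
    · rintro ⟨-, h⟩; exact Nat.eq_of_mul_eq_mul_right k.succ_pos h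
    · rintro rfl; exact ⟨hj, rfl⟩
  have hex : ∀ g ∈ latticeGroup V, ∃ j < N, φ g = j * (k+1) := by
    intro g hg
    have h1 : 0 < (hG.toFinset.filter fun g' => φ g' = φ g).card :=
      Finset.card_pos.2 ⟨g, Finset.mem_filter.2 ⟨(hS g).2 hg, rfl⟩⟩
    rw [hfib] at h1
    obtain ⟨j, hj⟩ := Finset.card_pos.1 h1
    rw [Finset.mem_filter, Finset.mem_range] at hj
    exact ⟨j, hj.1, hj.2.symm⟩
  choose! f hfN hf using hex
  have hinj : ∀ g ∈ latticeGroup V, ∀ g' ∈ latticeGroup V, f g = f g' → g = g' := by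
    intro g hg g' hg' h
    refine Finset.card_le_one.1 (hfib1 (f g) (hfN g hg)).le g ?_ g' ?_
    · exact Finset.mem_filter.2 ⟨(hS g).2 hg, hf g hg⟩
    · exact Finset.mem_filter.2 ⟨(hS g').2 hg', by rw [h]; exact hf g' hg'⟩
  have hsurj : ∀ j < N, ∃ g ∈ latticeGroup V, f g = j := by
    intro j hj
    obtain ⟨g, hg⟩ := Finset.card_pos.1 (by rw [hfib1 j hj]; exact one_pos)
    rw [Finset.mem_filter, hS] at hg
    exact ⟨g, hg.1, Nat.eq_of_mul_eq_mul_right k.succ_pos ((hf g hg.1).symm.trans hg.2)⟩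
  have hcard : Nat.card (latticeGroup V) = N := by
    have h1 : Nat.card (latticeGroup V) = hG.toFinset.card := by
      rw [← Set.ncard_eq_toFinset_card _ hG]; rfl
    rw [h1, ← Finset.card_range N]
    refine Finset.card_nbij f (fun g hg => ?_) (fun g hg g' hg' h => ?_) (fun j hj => ?_)
    · exact Finset.mem_range.2 (hfN g ((hS g).1 hg))
    · exact hinj g ((hS g).1 hg) g' ((hS g').1 hg') h
    · obtain ⟨g, hg, rfl⟩ := hsurj j (Finset.mem_range.1 hj)
      exact ⟨g, (hS g).2 hg, rfl⟩
  refine ⟨hcard, fun hfull => ⟨f, k.succ_pos, fun g hg => ?_, hinj, hfN, hsurj, hcard, hfull⟩⟩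
  rw [hφ g hg, hf g hg, mul_comm]
  push_cast
  ring

end HeightSlices

section Pyramid

variable {e : ℕ}

lemma exists_basis_repr_last_eq (l : (Fin (e+1) → ℤ) →ₗ[ℤ] ℤ) (u : Fin (e+1) → ℤ)
    (hu : l u = 1) : ∃ B : Module.Basis (Fin (e+1)) ℤ (Fin (e+1) → ℤ),
      B (Fin.last e) = u ∧ ∀ v, B.repr v (Fin.last e) = l v := by
  have hrange : LinearMap.range l = ⊤ :=
    LinearMap.range_eq_top.2 fun z => ⟨z • u, by rw [map_smul, hu, smul_eq_mul, mul_one]⟩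
  have hrank : Module.finrank ℤ (LinearMap.ker l) = e := by
    have := Submodule.finrank_quotient_add_finrank (LinearMap.ker l)
    rw [l.quotKerEquivRange.finrank_eq, hrange, finrank_top, Module.finrank_self, Module.finrank_fin_fun] at this
    omega
  let b : Module.Basis (Fin e) ℤ (LinearMap.ker l) := Module.finBasisOfFinrankEq ℤ _ hrank
  let B := Module.Basis.mkFinSnoc b u
    (fun c x hx h => by
      have := congrArg l h
      rw [map_add, LinearMap.mem_ker.1 hx, map_smul, hu, map_zero] at this
      simpa using this)
    (fun z => ⟨-l z, by rw [LinearMap.mem_ker, map_add, map_smul, hu]; simp⟩)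
  have hlast : B (Fin.last e) = u := by simp [B]
  refine ⟨B, hlast, fun v => ?_⟩
  have h := congrArg l (B.sum_repr v)
  rw [map_sum, Fin.sum_univ_castSucc, hlast, map_smul, hu, smul_eq_mul, mul_one,
    Finset.sum_eq_zero, zero_add] at h
  · exact h
  · intro i _
    have : l (b i) = 0 := (b i).2
    rw [map_smul]
    simp [B, this]

/-- The coordinates of the vertices relative to a suitable lattice basis, if the lattice group
vanishes at `i₀`. -/
lemma exists_unimodular_vertex_coords {V : Fin (e+1+1) → Fin (e+1) → ℤ}
    (hV : AffineIndependent ℝ (fun i => (fun j => ((V i j : ℤ) : ℝ))))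
    {i₀ : Fin (e+1+1)} (h0 : ∀ g ∈ latticeGroup V, g i₀ = 0) :
    ∃ (U : Matrix (Fin (e+1)) (Fin (e+1)) ℤ) (w : Fin (e+1) → ℤ), IsUnit U.det ∧
      Matrix.vecMul (V i₀) U + w = Pi.single (Fin.last e) 1 ∧
      ∀ i, i ≠ i₀ → (Matrix.vecMul (V i) U + w) (Fin.last e) = 0 := by
  classical
  have hu : IsUnit (homogeneousMatrix V).det :=
    isUnit_iff_ne_zero.2 (det_homogeneousMatrix_ne_zero hV)
  have hcol : ∀ k, ∃ n : ℤ, (n : ℝ) = (homogeneousMatrix V)⁻¹ k i₀ := by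
    intro k
    rw [← coe_unit_eq_zero_iff]
    refine h0 (fun i => ((homogeneousMatrix V)⁻¹ k i : UnitAddCircle)) ?_
    rw [coe_mem_latticeGroup_iff_vecMul]
    intro j
    refine ⟨(1 : Matrix (Fin (e+1+1)) (Fin (e+1+1)) ℤ) k j, ?_⟩
    rw [← Matrix.mul_apply_eq_vecMul, Matrix.nonsing_inv_mul _ hu]
    by_cases hkj : k = j <;> simp [Matrix.one_apply, hkj]
  choose m hm using hcol
  have hone : ∀ i, m 0 + ∑ j : Fin (e+1), V i j * m j.succ = if i = i₀ then 1 else 0 := by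
    intro i
    have h1 : (homogeneousMatrix V * (homogeneousMatrix V)⁻¹) i i₀ =
        (1 : Matrix (Fin (e+1+1)) (Fin (e+1+1)) ℝ) i i₀ := by
      rw [Matrix.mul_nonsing_inv _ hu]
    rw [Matrix.mul_apply, Fin.sum_univ_succ] at h1
    simp only [← hm] at h1
    simp only [homogeneousMatrix, Matrix.of_apply, Fin.cons_zero, Fin.cons_succ, one_mul,
      Matrix.one_apply] at h1
    exact_mod_cast h1
  let l : (Fin (e+1) → ℤ) →ₗ[ℤ] ℤ := Fintype.linearCombination ℤ fun j => m j.succ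
  have hl : ∀ i, l (V i) = (if i = i₀ then 1 else 0) - m 0 := by
    intro i
    rw [← hone i]
    simp [l, Fintype.linearCombination_apply]
  have hj₀ : i₀.succAbove 0 ≠ i₀ := Fin.succAbove_ne i₀ 0
  obtain ⟨B, hB, hBl⟩ := exists_basis_repr_last_eq l (V i₀ - V (i₀.succAbove 0)) (by
    rw [map_sub, hl, hl, if_pos rfl, if_neg hj₀]; ring)
  have hU : ∀ v, Matrix.vecMul v (B.toMatrix (Pi.basisFun ℤ (Fin (e+1)))).transpose =
      B.repr v := by
    intro v
    rw [Matrix.vecMul_transpose]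
    have hr : (Pi.basisFun ℤ (Fin (e+1))).repr v = (v : Fin (e+1) → ℤ) := by ext j; simp
    have := (Pi.basisFun ℤ (Fin (e+1))).toMatrix_mulVec_repr B v
    rwa [hr] at this
  refine ⟨(B.toMatrix (Pi.basisFun ℤ (Fin (e+1)))).transpose, -B.repr (V (i₀.succAbove 0)),
    ?_, ?_, fun i hi => ?_⟩
  · rw [Matrix.det_transpose, ← Module.Basis.det_apply]
    exact B.isUnit_det _
  · have h1 : (B.repr (V i₀ - V (i₀.succAbove 0)) : Fin (e+1) → ℤ) = Pi.single (Fin.last e) 1 := by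
      rw [← hB, B.repr_self, Finsupp.single_eq_pi_single]
    rw [hU, ← h1, map_sub, Finsupp.coe_sub, sub_eq_add_neg]
  · rw [hU, Pi.add_apply, Pi.neg_apply, hBl, hBl, hl, hl, if_neg hi, if_neg hj₀]
    ring

lemma range_fin_eq_insert_succAbove {α : Type*} {n : ℕ} (f : Fin (n+1) → α) (i : Fin (n+1)) :
    Set.range f = Set.range (fun l => f (i.succAbove l)) ∪ {f i} := by
  ext x
  simp only [Set.mem_range, Set.mem_union, Set.mem_singleton_iff]
  rw [Fin.exists_iff_succAbove i, or_comm, eq_comm (a := x)]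

/-- A lattice simplex whose lattice group vanishes in some coordinate is a lattice pyramid. -/
theorem exists_unimodEquiv_pyr {V : Fin (e+1+1) → Fin (e+1) → ℤ}
    (hV : AffineIndependent ℝ (fun i => (fun j => ((V i j : ℤ) : ℝ))))
    {i₀ : Fin (e+1+1)} (h0 : ∀ g ∈ latticeGroup V, g i₀ = 0) :
    ∃ Q : Set (Fin e → ℝ), IsLatticeSimplex Q ∧
      UnimodEquiv (convexHull ℝ (Set.range fun i => (fun j => ((V i j : ℤ) : ℝ)))) (Pyr Q) := by
  obtain ⟨U, w, hU, hi₀, hi⟩ := exists_unimodular_vertex_coords hV h0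
  let F : (Fin (e+1) → ℝ) →ᵃ[ℝ] (Fin (e+1) → ℝ) :=
    (Matrix.vecMulLinear (U.map (fun a : ℤ => (a : ℝ)))).toAffineMap +
      AffineMap.const ℝ (Fin (e+1) → ℝ) (fun j => ((w j : ℤ) : ℝ))
  have hFapp : ∀ x, F x = Matrix.vecMul x (U.map (fun a : ℤ => (a : ℝ))) +
    (fun j => ((w j : ℤ) : ℝ)) := fun x => rfl
  have hFV : ∀ i, F (fun j => ((V i j : ℤ) : ℝ)) =
      fun j => (((Matrix.vecMul (V i) U + w) j : ℤ) : ℝ) := by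
    intro i
    funext j
    rw [hFapp]
    simp [Matrix.vecMul, dotProduct]
  have hUR : IsUnit (U.map (fun a : ℤ => (a : ℝ))) := by
    rw [Matrix.isUnit_iff_isUnit_det]
    have : (U.map (fun a : ℤ => (a : ℝ))).det = (Int.castRingHom ℝ) U.det :=
      (RingHom.map_det (Int.castRingHom ℝ) U).symm
    rw [this]
    exact hU.map _
  have hFinj : Function.Injective F := fun x y hxy => by
    rw [hFapp, hFapp] at hxy
    exact Matrix.vecMul_injective_of_isUnit hUR (add_right_cancel hxy)
  let W : Fin (e+1) → Fin e → ℤ := fun l => Fin.init (Matrix.vecMul (V (i₀.succAbove l)) U + w)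
  let S : (Fin e → ℝ) →ₗ[ℝ] (Fin (e+1) → ℝ) :=
    { toFun := fun x => Fin.snoc x 0
      map_add' := fun x y => by
        ext j; refine Fin.lastCases ?_ (fun j => ?_) j <;> simp
      map_smul' := fun c x => by
        ext j; refine Fin.lastCases ?_ (fun j => ?_) j <;> simp }
  have hSW : ∀ l, S (fun j => ((W l j : ℤ) : ℝ)) =
      F (fun j => ((V (i₀.succAbove l) j : ℤ) : ℝ)) := by
    intro l
    rw [hFV]
    ext j
    refine Fin.lastCases ?_ (fun j => ?_) j
    · rw [hi _ (Fin.succAbove_ne i₀ l)]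
      simp [S]
    · simp [S, W, Fin.init]
  have hFi₀ : F (fun j => ((V i₀ j : ℤ) : ℝ)) = Fin.snoc (0 : Fin e → ℝ) 1 := by
    rw [hFV, hi₀]
    ext j
    refine Fin.lastCases ?_ (fun j => ?_) j <;> simp
  refine ⟨convexHull ℝ (Set.range fun l => (fun j => ((W l j : ℤ) : ℝ))), ⟨W, ?_, rfl⟩,
    U, w, hU, ?_⟩
  · refine AffineIndependent.of_comp S.toAffineMap ?_
    have h1 := (hV.map' F hFinj).comp_embedding i₀.succAboveEmb
    have h2 : S.toAffineMap ∘ (fun l => (fun j => ((W l j : ℤ) : ℝ))) =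
        (F ∘ fun i => (fun j => ((V i j : ℤ) : ℝ))) ∘ i₀.succAboveEmb := funext hSW
    rw [h2]
    exact h1
  · have h1 : (fun x : Fin (e+1) → ℝ => Matrix.vecMul x (U.map (fun a : ℤ => (a : ℝ))) +
        (fun j => ((w j : ℤ) : ℝ))) = F := rfl
    have h2 : (fun x : Fin e → ℝ => (Fin.snoc x 0 : Fin (e+1) → ℝ)) = S := rfl
    rw [h1, Pyr, h2, S.image_convexHull, convexHull_convexHull_union_left, F.image_convexHull,
      ← Set.range_comp, ← Set.range_comp, range_fin_eq_insert_succAbove (F ∘ _) i₀]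
    congr 2
    · congr 1
      funext l
      exact hSW l
    · rw [← hFi₀]; rfl

end Pyramid

section ExplicitSimplices

variable {d : ℕ}

lemma exists_nsmul_one_div {n : ℕ} (hn : 0 < n) {x : UnitAddCircle} (hx : n • x = 0) :
    ∃ m : ℕ, x = m • ((1 / (n : ℝ) : ℝ) : UnitAddCircle) := by
  obtain ⟨m, -, hm⟩ := (AddCircle.nsmul_eq_zero_iff hn).1 hx
  refine ⟨m, ?_⟩
  rw [← hm, ← AddCircle.coe_nsmul, nsmul_eq_mul, mul_one, mul_one_div]

lemma addOrderOf_one_div {n : ℕ} (hn : 0 < n) :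
    addOrderOf ((1 / (n : ℝ) : ℝ) : UnitAddCircle) = n :=
  AddCircle.addOrderOf_period_div hn

lemma natCast_zsmul_one_div {n : ℕ} (hn : 0 < n) :
    (n : ℤ) • ((1 / (n : ℝ) : ℝ) : UnitAddCircle) = 0 := by
  rw [natCast_zsmul]
  exact addOrderOf_dvd_iff_nsmul_eq_zero.1 (addOrderOf_one_div hn).dvd

lemma dvd_natCard_of_apply_eq_one_div {ι : Type*} {L : AddSubgroup (ι → UnitAddCircle)}
    {g : ι → UnitAddCircle} (hg : g ∈ L) {i : ι} {n : ℕ} (hn : 0 < n)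
    (hi : g i = ((1 / (n : ℝ) : ℝ) : UnitAddCircle)) : n ∣ Nat.card L := by
  rw [← addOrderOf_one_div hn, ← hi]
  refine dvd_trans ?_ (addOrderOf_dvd_natCard (⟨g, hg⟩ : L))
  exact addOrderOf_map_dvd ((Pi.evalAddMonoidHom _ i).comp L.subtype) ⟨g, hg⟩

lemma eq_of_le_of_natCard_dvd {M : Type*} [AddGroup M] {L G : AddSubgroup M} (h : L ≤ G)
    (hpos : 0 < Nat.card G) (hdvd : Nat.card G ∣ Nat.card L) : L = G := by
  have : Finite G := Nat.finite_of_card_ne_zero hpos.ne'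
  have : Finite L := Finite.of_injective _ (AddSubgroup.inclusion_injective h)
  exact AddSubgroup.eq_of_le_of_card_ge h (Nat.le_of_dvd Nat.card_pos hdvd)

lemma eq_zero_of_sum_eq_zero_of_succ {y : Fin (d+1) → UnitAddCircle} (h : ∑ i, y i = 0)
    (hs : ∀ j : Fin d, y j.succ = 0) : y = 0 := by
  rw [Fin.sum_univ_succ, Finset.sum_eq_zero fun j _ => hs j, add_zero] at h
  funext i
  exact Fin.cases h hs i

lemma sum_ite_smul_one (t : Fin d) (T : ℤ) (x : Fin d → UnitAddCircle) (j : Fin d) :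
    ∑ i, (if i = t then T else if i = j then 1 else 0) • x i =
      T • x t + if j = t then 0 else x j := by
  have h : ∀ i, (if i = t then T else if i = j then 1 else 0) • x i =
      (if i = t then T • x t else 0) + if i = j then (if j = t then 0 else x j) else 0 := by
    intro i
    by_cases hi : i = t
    · subst hi; by_cases hj : i = j <;> simp [hj]
    · by_cases hj : i = j
      · subst hj; simp [hi]
      · simp [hi, hj]
  rw [Finset.sum_congr rfl fun i _ => h i, Finset.sum_add_distrib]
  simp

lemma sum_ite_smul_two {s t : Fin d} (hst : s ≠ t) (R T : ℤ) (x : Fin d → UnitAddCircle)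
    (j : Fin d) :
    ∑ i, (if i = s then R else if i = t then T else if i = j then 1 else 0) • x i =
      R • x s + T • x t + if j = s ∨ j = t then 0 else x j := by
  have h : ∀ i, (if i = s then R else if i = t then T else if i = j then 1 else 0) • x i =
      (if i = s then R • x s else 0) + (if i = t then T • x t else 0) +
        if i = j then (if j = s ∨ j = t then 0 else x j) else 0 := by
    intro i
    by_cases hi : i = s
    · subst hi; by_cases hj : i = j
      · subst hj; simp [hst]
      · simp [hj, hst]
    · by_cases hi' : i = t
      · subst hi'; by_cases hj : i = j
        · subst hj; simp [hi]
        · simp [hi, hj]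
      · by_cases hj : i = j
        · subst hj; simp [hi, hi']
        · simp [hi, hi', hj]
  rw [Finset.sum_congr rfl fun i _ => h i, Finset.sum_add_distrib, Finset.sum_add_distrib]
  simp

lemma lastEntry_eq {n : ℕ} (A : Fin n → ℤ) {t : Fin n} (ht : (t : ℕ) + 1 = n) :
    lastEntry A = A t := by
  rw [lastEntry, dif_pos (by omega)]
  exact congrArg A (Fin.ext (by simp; omega))

lemma range_cast_cons_zero (R : Fin d → Fin d → ℤ) :
    (Set.range fun i => (fun j => (((Fin.cons 0 R : Fin (d+1) → Fin d → ℤ) i j : ℤ) : ℝ))) =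
      insert 0 (Set.range fun i => (fun j => ((R i j : ℤ) : ℝ))) := by
  rw [← Fin.range_cons]
  congr 1
  funext i
  refine Fin.cases ?_ (fun i => ?_) i
  · funext j; simp
  · funext j; simp

/-- The vertices of `Δ(A)`; `t` is the last index. -/
def verticesA (t : Fin d) (A : Fin d → ℤ) : Fin (d+1) → Fin d → ℤ :=
  Fin.cons 0 fun i j => if i = t then A t - (if j = t then 0 else A j) else if i = j then 1 else 0

lemma simplexA_eq_convexHull {t : Fin d} (ht : (t : ℕ) + 1 = d) (A : Fin d → ℤ) :
    simplexA A = convexHull ℝ (Set.range fun i => (fun j => ((verticesA t A i j : ℤ) : ℝ))) := by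
  have hlt : ∀ j : Fin d, (j : ℕ) + 1 < d ↔ j ≠ t := fun j => by
    rw [Ne, Fin.ext_iff]; omega
  rw [verticesA, range_cast_cons_zero, simplexA]
  congr 3
  funext i j
  by_cases hi : i = t
  · by_cases hj : j = t <;> simp [hlt, hi, hj, rowA, lastEntry_eq A ht]
  · simp [hlt, hi, Pi.single_apply, eq_comm]

lemma mem_latticeGroup_verticesA (t : Fin d) (A : Fin d → ℤ) (g : Fin (d+1) → UnitAddCircle) :
    g ∈ latticeGroup (verticesA t A) ↔ ∑ i, g i = 0 ∧ ∀ j,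
      (A t - (if j = t then 0 else A j)) • g t.succ + (if j = t then 0 else g j.succ) = 0 := by
  rw [mem_latticeGroup]
  refine and_congr_right fun _ => forall_congr' fun j => ?_
  rw [← sum_ite_smul_one t _ (fun i => g i.succ) j, Fin.sum_univ_succ]
  simp [verticesA]

/-- A criterion for a lattice simplex to be equivalent to `Δ(A)`. -/
theorem unimodEquiv_simplexA {V : Fin (d+1) → Fin d → ℤ}
    (hV : AffineIndependent ℝ (fun i => (fun j => ((V i j : ℤ) : ℝ)))) {N : ℕ} (hN : 0 < N)
    (hcard : Nat.card (latticeGroup V) = N) {t : Fin d} (ht : (t : ℕ) + 1 = d) {A : Fin d → ℤ}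
    (hA : A t = N) {g : Fin (d+1) → UnitAddCircle} (hg : g ∈ latticeGroup V)
    (hgA : ∀ j : Fin d, g j.succ =
      (if j = t then 1 else A j) • ((1 / (N : ℝ) : ℝ) : UnitAddCircle)) :
    UnimodEquiv (convexHull ℝ (Set.range fun i => (fun j => ((V i j : ℤ) : ℝ)))) (simplexA A) := by
  rw [simplexA_eq_convexHull ht]
  refine unimodEquiv_of_latticeGroup_eq hV (Eq.symm ?_)
  have hgt : g t.succ = ((1 / (N : ℝ) : ℝ) : UnitAddCircle) := by rw [hgA]; simp
  have hg' : g ∈ latticeGroup (verticesA t A) := by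
    rw [mem_latticeGroup_verticesA]
    refine ⟨hg.1, fun j => ?_⟩
    by_cases hj : j = t
    · rw [if_pos hj, if_pos hj, hgt, hA, sub_zero, natCast_zsmul_one_div hN, add_zero]
    · rw [if_neg hj, if_neg hj, hgt, hgA, if_neg hj, ← add_smul, sub_add_cancel, hA,
        natCast_zsmul_one_div hN]
  refine eq_of_le_of_natCard_dvd (fun x hx => ?_) (hcard ▸ hN)
    (hcard ▸ dvd_natCard_of_apply_eq_one_div hg' hN hgt)
  have hxt := ((mem_latticeGroup_verticesA t A x).1 hx).2 t
  rw [if_pos rfl, if_pos rfl, sub_zero, add_zero, hA, natCast_zsmul] at hxt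
  obtain ⟨m, hm⟩ := exists_nsmul_one_div hN hxt
  have hy := (mem_latticeGroup_verticesA t A _).1 (sub_mem hx (nsmul_mem hg' m))
  have hyt : (x - m • g) t.succ = 0 := by
    rw [Pi.sub_apply, Pi.smul_apply, hgt, hm, sub_self]
  have hy0 : x - m • g = 0 := by
    refine eq_zero_of_sum_eq_zero_of_succ hy.1 fun j => ?_
    by_cases hj : j = t
    · rw [hj, hyt]
    · have := hy.2 j
      rwa [hyt, smul_zero, zero_add, if_neg hj] at this
  rw [sub_eq_zero.1 hy0]
  exact nsmul_mem hg m

/-- The vertices of `Δ(B, C)` for `B = (1, …, 1, p)` and `C = (q, …, q, 1, …, 1, q)`, where `s`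
is the index of the last entry of `B` and `t` that of `C`. -/
def verticesBC (s t : Fin d) (p q : ℤ) : Fin (d+1) → Fin d → ℤ :=
  Fin.cons 0 fun i j =>
    if i = s then (if j < s then p - 1 else if j = s then p else 0)
    else if i = t then (if j ≤ s then 0 else if j = t then q else q - 1)
    else if i = j then 1 else 0

lemma simplexBC_eq_convexHull {s t : Fin d} (hst : s < t) (ht : (t : ℕ) + 1 = d) {p q : ℤ} {n : ℕ}
    (hn : (s : ℕ) + 1 = n) {B : Fin n → ℤ} {C : Fin d → ℤ}
    (hB : ∀ i : Fin n, B i = if (i : ℕ) < s then 1 else p)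
    (hC : ∀ i, C i = if i ≤ s then q else if i = t then q else 1) :
    simplexBC n B C =
      convexHull ℝ (Set.range fun i => (fun j => ((verticesBC s t p q i j : ℤ) : ℝ))) := by
  have hlt : ∀ j : Fin d, (j : ℕ) + 1 < d ↔ j ≠ t := fun j => by
    rw [Ne, Fin.ext_iff]; omega
  have heqt : ∀ j : Fin d, (j : ℕ) + 1 = d ↔ j = t := fun j => by
    rw [Fin.ext_iff]; omega
  have heqs : ∀ j : Fin d, (j : ℕ) + 1 = n ↔ j = s := fun j => by
    rw [Fin.ext_iff]; omega
  have hlts : ∀ j : Fin d, (j : ℕ) + 1 < n ↔ j < s := fun j => by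
    rw [Fin.lt_def]; omega
  have hBl : lastEntry B = p := by
    rw [lastEntry_eq B (t := ⟨s, by omega⟩) hn, hB]; simp
  have hCl : lastEntry C = q := by
    rw [lastEntry_eq C ht, hC]; simp
  rw [verticesBC, range_cast_cons_zero, simplexBC]
  congr 3
  funext i j
  by_cases hi : i = s
  · by_cases hj : j < s
    · simp [heqs, hlts, hi, hj, rowB, hBl, hB]
    · by_cases hj' : j = s <;> simp [heqs, hlts, hi, hj, hj', rowB, hBl]
  · by_cases hi' : i = t
    · subst hi'
      by_cases hj : j ≤ s
      · simp [heqs, heqt, hlt, hi, hj, rowA, hCl, hC, (hj.trans_lt hst).ne]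
      · by_cases hj' : j = i
        · subst hj'; simp [heqs, heqt, hlt, hi, hj, rowA, hCl]
        · simp [heqs, heqt, hlt, hi, hj, hj', rowA, hCl, hC]
    · simp [heqs, heqt, hi, hi', Pi.single_apply, eq_comm]

lemma mem_latticeGroup_verticesBC {s t : Fin d} (hst : s ≠ t) (p q : ℤ)
    (g : Fin (d+1) → UnitAddCircle) :
    g ∈ latticeGroup (verticesBC s t p q) ↔ ∑ i, g i = 0 ∧ ∀ j,
      (if j < s then p - 1 else if j = s then p else 0) • g s.succ +
        (if j ≤ s then 0 else if j = t then q else q - 1) • g t.succ +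
        (if j = s ∨ j = t then 0 else g j.succ) = 0 := by
  rw [mem_latticeGroup]
  refine and_congr_right fun _ => forall_congr' fun j => ?_
  rw [← sum_ite_smul_two hst _ _ (fun i => g i.succ) j, Fin.sum_univ_succ]
  simp [verticesBC]

/-- A criterion for a lattice simplex to be equivalent to `Δ(B, C)`. -/
theorem unimodEquiv_simplexBC {V : Fin (d+1) → Fin d → ℤ}
    (hV : AffineIndependent ℝ (fun i => (fun j => ((V i j : ℤ) : ℝ)))) {p q : ℕ} (hp : 0 < p)
    (hq : 0 < q) (hpq : p.Coprime q) (hcard : Nat.card (latticeGroup V) = p * q) {s t : Fin d}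
    (hst : s < t) (ht : (t : ℕ) + 1 = d) {n : ℕ} (hn : (s : ℕ) + 1 = n) {B : Fin n → ℤ}
    {C : Fin d → ℤ} (hB : ∀ i : Fin n, B i = if (i : ℕ) < s then 1 else (p : ℤ))
    (hC : ∀ i, C i = if i ≤ s then (q : ℤ) else if i = t then (q : ℤ) else 1)
    {h g : Fin (d+1) → UnitAddCircle} (hh : h ∈ latticeGroup V) (hg : g ∈ latticeGroup V)
    (hhs : ∀ j : Fin d, h j.succ = if j ≤ s then ((1 / (p : ℝ) : ℝ) : UnitAddCircle) else 0)
    (hgs : ∀ j : Fin d, g j.succ = if j ≤ s then 0 else ((1 / (q : ℝ) : ℝ) : UnitAddCircle)) :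
    UnimodEquiv (convexHull ℝ (Set.range fun i => (fun j => ((V i j : ℤ) : ℝ))))
      (simplexBC n B C) := by
  rw [simplexBC_eq_convexHull hst ht hn hB hC]
  refine unimodEquiv_of_latticeGroup_eq hV (Eq.symm ?_)
  have hhs' : h s.succ = ((1 / (p : ℝ) : ℝ) : UnitAddCircle) := by rw [hhs, if_pos le_rfl]
  have hht : h t.succ = 0 := by rw [hhs, if_neg (not_le.2 hst)]
  have hgs' : g s.succ = 0 := by rw [hgs, if_pos le_rfl]
  have hgt : g t.succ = ((1 / (q : ℝ) : ℝ) : UnitAddCircle) := by rw [hgs, if_neg (not_le.2 hst)]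
  have hh' : h ∈ latticeGroup (verticesBC s t (p : ℤ) q) := by
    rw [mem_latticeGroup_verticesBC hst.ne]
    refine ⟨hh.1, fun j => ?_⟩
    rw [hhs', hht, smul_zero, add_zero, hhs]
    rcases lt_trichotomy j s with hj | hj | hj
    · simp only [hj, hj.le, hj.ne, (hj.trans hst).ne, if_true, or_self, if_false]
      rw [sub_smul, one_smul, sub_add_cancel, natCast_zsmul_one_div hp]
    · simp only [hj, lt_irrefl, if_true, true_or, if_false, add_zero]
      exact natCast_zsmul_one_div hp
    · simp [hj.not_gt, hj.ne', hj.not_ge]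
  have hg' : g ∈ latticeGroup (verticesBC s t (p : ℤ) q) := by
    rw [mem_latticeGroup_verticesBC hst.ne]
    refine ⟨hg.1, fun j => ?_⟩
    rw [hgs', hgt, smul_zero, zero_add, hgs]
    by_cases hj : j ≤ s
    · simp [hj]
    · by_cases hjt : j = t
      · simp only [hjt, not_le.2 hst, if_true, or_true, if_false, add_zero]
        exact natCast_zsmul_one_div hq
      · have hjs : j ≠ s := fun h => hj h.le
        simp only [hj, hjt, hjs, or_self, if_false]
        rw [sub_smul, one_smul, sub_add_cancel, natCast_zsmul_one_div hq]
  refine eq_of_le_of_natCard_dvd (fun x hx => ?_) (hcard ▸ Nat.mul_pos hp hq)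
    (hcard ▸ hpq.mul_dvd_of_dvd_of_dvd (dvd_natCard_of_apply_eq_one_div hh' hp hhs')
      (dvd_natCard_of_apply_eq_one_div hg' hq hgt))
  have hx' := ((mem_latticeGroup_verticesBC hst.ne p q x).1 hx).2
  have hxs : p • x s.succ = 0 := by simpa using hx' s
  have hxt : q • x t.succ = 0 := by
    simpa [hst.not_gt, hst.ne', hst.not_ge] using hx' t
  obtain ⟨m, hm⟩ := exists_nsmul_one_div hp hxs
  obtain ⟨l, hl⟩ := exists_nsmul_one_div hq hxt
  have hy := (mem_latticeGroup_verticesBC hst.ne p q _).1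
    (sub_mem (sub_mem hx (nsmul_mem hh' m)) (nsmul_mem hg' l))
  have hys : (x - m • h - l • g) s.succ = 0 := by
    simp [hhs', hgs', hm]
  have hyt : (x - m • h - l • g) t.succ = 0 := by
    simp [hht, hgt, hl]
  have hy0 : x - m • h - l • g = 0 := by
    refine eq_zero_of_sum_eq_zero_of_succ hy.1 fun j => ?_
    by_cases hj : j = s
    · rw [hj, hys]
    · by_cases hj' : j = t
      · rw [hj', hyt]
      · have := hy.2 j
        rwa [hyt, hys, smul_zero, smul_zero, zero_add, zero_add, if_neg (by tauto)] at this
  rw [sub_sub, sub_eq_zero] at hy0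
  rw [hy0]
  exact add_mem (nsmul_mem hh m) (nsmul_mem hg l)

end ExplicitSimplices

section Assembly

variable {d : ℕ}

lemma exists_perm_mem_iff {ι : Type*} [Fintype ι] [DecidableEq ι] {A A' : Finset ι}
    (h : A'.card = A.card) : ∃ σ : Equiv.Perm ι, ∀ i, σ i ∈ A ↔ i ∈ A' := by
  let e : {x // x ∈ A'} ≃ {x // x ∈ A} := Finset.equivOfCardEq h
  exact ⟨e.extendSubtype, fun i => ⟨fun hi => by_contra fun hn => e.extendSubtype_not_mem i hn hi,
    fun hi => e.extendSubtype_mem i hi⟩⟩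

lemma card_filter_fin (n : ℕ) (P : ℕ → Prop) [DecidablePred P] :
    (Finset.univ.filter fun i : Fin n => P i).card = ((Finset.range n).filter P).card := by
  rw [Finset.card_filter, Finset.card_filter, Fin.sum_univ_eq_sum_range (fun i => if P i then 1 else 0)]

lemma comp_mem_latticeGroup {V : Fin (d+1) → Fin d → ℤ} {g : Fin (d+1) → UnitAddCircle}
    (hg : g ∈ latticeGroup V) (σ : Equiv.Perm (Fin (d+1))) :
    (fun i => g (σ i)) ∈ latticeGroup fun i => V (σ i) :=
  ⟨(Equiv.sum_comp σ g).trans hg.1, fun j =>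
    (Equiv.sum_comp σ fun i => V i j • g i).trans (hg.2 j)⟩

lemma range_cast_comp_perm (V : Fin (d+1) → Fin d → ℤ) (σ : Equiv.Perm (Fin (d+1))) :
    (Set.range fun i => (fun j => ((V (σ i) j : ℤ) : ℝ))) =
      Set.range fun i => (fun j => ((V i j : ℤ) : ℝ)) :=
  σ.surjective.range_comp fun i => (fun j => ((V i j : ℤ) : ℝ))

theorem PrimeOrderShape.unimodEquiv {V : Fin (d+1) → Fin d → ℤ} {p q k : ℕ} (hp : p.Prime)
    (hq : q.Prime) (hpq : p ≠ q)
    (hV : AffineIndependent ℝ (fun i => (fun j => ((V i j : ℤ) : ℝ))))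
    (hδ : HasDeltaPolySimplex d (p*q) k
      (convexHull ℝ (Set.range fun i => (fun j => ((V i j : ℤ) : ℝ)))))
    (hs : PrimeOrderShape (latticeGroup V) (k+1) p q) :
    (d = p*(q+1)*(k+1) - 1 ∧
      UnimodEquiv (convexHull ℝ (Set.range fun i => (fun j => ((V i j : ℤ) : ℝ))))
      (simplexBC (p*(k+1))
        (fun i : Fin (p*(k+1)) =>
          if (i : ℕ) < p*(k+1) - 1 then 1 else (p : ℤ))
        (fun i : Fin d =>
          if (i : ℕ) < p*(k+1) then (q : ℤ)
          else if (i : ℕ) < p*(k+1) + (p*q*(k+1) - 2) then 1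
          else (q : ℤ)))) ∨
    (d = (p*q + p - 1)*(k+1) - 1 ∧
      UnimodEquiv (convexHull ℝ (Set.range fun i => (fun j => ((V i j : ℤ) : ℝ))))
      (simplexA (fun i : Fin d =>
        if (i : ℕ) < p*(k+1) - 1 then 1
        else if (i : ℕ) < p*(k+1) - 1 + ((p*q - 1)*(k+1) - 1) then (p : ℤ)
        else (p*q : ℤ)))) := by
  have hN : 0 < p * q := Nat.mul_pos hp.pos hq.pos
  have hVσ : ∀ σ : Equiv.Perm (Fin (d+1)),
      AffineIndependent ℝ (fun i => (fun j => ((V (σ i) j : ℤ) : ℝ))) := fun σ =>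
    hV.comp_embedding σ.toEmbedding
  have hcard : ∀ σ : Equiv.Perm (Fin (d+1)),
      Nat.card (latticeGroup fun i => V (σ i)) = p * q := fun σ =>
    (card_and_exists_hasProgressionHeights hN (hVσ σ) (by rwa [range_cast_comp_perm V σ])).1
  have hP : 2 ≤ p * (k+1) := hp.two_le.trans (Nat.le_mul_of_pos_right p k.succ_pos)
  obtain ⟨A, hA, ⟨hd, h, hh, g, hg, hhA, hhA', hgA, hgA'⟩ | ⟨hd, g, hg, hgA, hgA'⟩⟩ := hs
  · have hX : 2 ≤ p * q * (k+1) :=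
      (hp.two_le.trans (Nat.le_mul_of_pos_right p hq.pos)).trans
        (Nat.le_mul_of_pos_right _ k.succ_pos)
    rw [Fintype.card_fin] at hd
    left
    refine ⟨?_, ?_⟩
    · rw [show p * (q+1) * (k+1) = p * (k+1) + p * q * (k+1) by ring]; omega
    generalize hPdef : p * (k+1) = P at *
    generalize p * q * (k+1) = X at *
    obtain ⟨σ, hσ⟩ := exists_perm_mem_iff (A := A)
      (A' := Finset.univ.filter fun i : Fin (d+1) => 1 ≤ (i : ℕ) ∧ (i : ℕ) ≤ P) (by
        rw [card_filter_fin (d+1) fun i => 1 ≤ i ∧ i ≤ P, hA,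
          show (Finset.range (d+1)).filter (fun i => 1 ≤ i ∧ i ≤ P) = Finset.Icc 1 P by
            ext i; simp only [Finset.mem_filter, Finset.mem_range, Finset.mem_Icc]; omega]
        simp)
    rw [← range_cast_comp_perm V σ]
    have hσ' : ∀ j : Fin d, σ j.succ ∈ A ↔ j ≤ (⟨P - 1, by omega⟩ : Fin d) := by
      intro j
      rw [hσ, Finset.mem_filter, Fin.le_def, Fin.val_succ]
      simp only [Finset.mem_univ, true_and]
      omega
    refine unimodEquiv_simplexBC (hVσ σ) hp.pos hq.pos ((Nat.coprime_primes hp hq).2 hpq) (hcard σ)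
      (s := ⟨P - 1, by omega⟩) (t := ⟨d - 1, by omega⟩) ?_ ?_ ?_ (fun i => rfl) (fun i => ?_)
      (comp_mem_latticeGroup hh σ) (comp_mem_latticeGroup hg σ) (fun j => ?_) (fun j => ?_)
    · rw [Fin.lt_def]; dsimp only; omega
    · dsimp only; omega
    · dsimp only; omega
    · have hi := i.2
      simp only [Fin.le_def, Fin.ext_iff]
      split_ifs <;> first | rfl | omega
    · rw [← if_congr (hσ' j) rfl rfl]
      split_ifs with hj
      · exact hhA _ hj
      · exact hhA' _ hj
    · rw [← if_congr (hσ' j) rfl rfl]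
      split_ifs with hj
      · exact hgA _ hj
      · exact hgA' _ hj
  · have hY : 1 ≤ (p * q - 1) * (k+1) := by
      have h1 : 2 ≤ p * q := hp.two_le.trans (Nat.le_mul_of_pos_right p hq.pos)
      exact Nat.mul_pos (by omega) k.succ_pos
    rw [Fintype.card_fin] at hd
    right
    refine ⟨?_, ?_⟩
    · rw [show (p*q + p - 1) * (k+1) = p * (k+1) + (p * q - 1) * (k+1) by
        rw [← add_mul]; congr 1; omega]
      omega
    generalize hPdef : p * (k+1) = P at *
    generalize (p * q - 1) * (k+1) = Y at *
    obtain ⟨σ, hσ⟩ := exists_perm_mem_iff (A := A)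
      (A' := Finset.univ.filter fun i : Fin (d+1) => (1 ≤ (i : ℕ) ∧ (i : ℕ) < P) ∨ (i : ℕ) = d) (by
        rw [card_filter_fin (d+1) fun i => (1 ≤ i ∧ i < P) ∨ i = d, hA,
          show (Finset.range (d+1)).filter (fun i => (1 ≤ i ∧ i < P) ∨ i = d) =
            insert d (Finset.Ico 1 P) by
            ext i
            simp only [Finset.mem_filter, Finset.mem_range, Finset.mem_Ico, Finset.mem_insert]
            omega,
          Finset.card_insert_of_notMem (by rw [Finset.mem_Ico]; omega), Nat.card_Ico]
        omega)
    rw [← range_cast_comp_perm V σ]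
    have hσ' : ∀ j : Fin d, σ j.succ ∈ A ↔ (j : ℕ) + 1 < P ∨ (j : ℕ) + 1 = d := by
      intro j
      rw [hσ, Finset.mem_filter, Fin.val_succ]
      simp only [Finset.mem_univ, true_and]
      omega
    refine unimodEquiv_simplexA (hVσ σ) hN (hcard σ) (t := ⟨d - 1, by omega⟩) ?_ ?_
      (comp_mem_latticeGroup hg σ) (fun j => ?_)
    · dsimp only; omega
    · dsimp only
      rw [if_neg (by omega), if_neg (by omega), Nat.cast_mul]
    · have hj := j.2
      simp only [Fin.ext_iff]
      by_cases hjA : σ j.succ ∈ A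
      · rw [hgA _ hjA, Nat.cast_mul]
        rcases (hσ' j).1 hjA with h1 | h1
        · rw [if_neg (by omega), if_pos (by omega), one_smul]
        · rw [if_pos (by omega), one_smul]
      · rw [hgA' _ hjA]
        rw [hσ'] at hjA
        rw [if_neg (by omega), if_neg (by omega), if_pos (by omega), ← AddCircle.coe_zsmul]
        congr 1
        have : (p : ℝ) ≠ 0 := by exact_mod_cast hp.ne_zero
        rw [zsmul_eq_mul]
        push_cast
        field_simp

end Assembly

theorem stmt_17 (p q k d : ℕ) (hp : p.Prime) (hq : q.Prime) (hpq : p ≠ q)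
    (Δ : Set (Fin d → ℝ))
    (hsimp : IsLatticeSimplex Δ)
    (hδ : HasDeltaPolySimplex d (p*q) k Δ)
    (hpyr : ¬ ∃ (e : ℕ) (h : d = e + 1) (Q : Set (Fin e → ℝ)),
      IsLatticeSimplex Q ∧
      UnimodEquiv ((fun x : Fin d → ℝ => x ∘ (finCongr h.symm)) '' Δ) (Pyr Q)) :
    (d = p*q*(k+1) - 1 ∧
      UnimodEquiv Δ (simplexA (fun i : Fin d =>
        if (i : ℕ) < p*q*(k+1) - 2 then 1 else (p*q : ℤ)))) ∨
    (d = p*(q+1)*(k+1) - 1 ∧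
      UnimodEquiv Δ (simplexBC (p*(k+1))
        (fun i : Fin (p*(k+1)) =>
          if (i : ℕ) < p*(k+1) - 1 then 1 else (p : ℤ))
        (fun i : Fin d =>
          if (i : ℕ) < p*(k+1) then (q : ℤ)
          else if (i : ℕ) < p*(k+1) + (p*q*(k+1) - 2) then 1
          else (q : ℤ)))) ∨
    (d = (p+1)*q*(k+1) - 1 ∧
      UnimodEquiv Δ (simplexBC (q*(k+1))
        (fun i : Fin (q*(k+1)) =>
          if (i : ℕ) < q*(k+1) - 1 then 1 else (q : ℤ))
        (fun i : Fin d =>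
          if (i : ℕ) < q*(k+1) then (p : ℤ)
          else if (i : ℕ) < q*(k+1) + (p*q*(k+1) - 2) then 1
          else (p : ℤ)))) ∨
    (d = (p*q + p - 1)*(k+1) - 1 ∧
      UnimodEquiv Δ (simplexA (fun i : Fin d =>
        if (i : ℕ) < p*(k+1) - 1 then 1
        else if (i : ℕ) < p*(k+1) - 1 + ((p*q - 1)*(k+1) - 1) then (p : ℤ)
        else (p*q : ℤ)))) ∨
    (d = (p*q + q - 1)*(k+1) - 1 ∧
      UnimodEquiv Δ (simplexA (fun i : Fin d =>
        if (i : ℕ) < q*(k+1) - 1 then 1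
        else if (i : ℕ) < q*(k+1) - 1 + ((p*q - 1)*(k+1) - 1) then (q : ℤ)
        else (p*q : ℤ)))) := by
  obtain ⟨V, hV, rfl⟩ := hsimp
  have hN : 0 < p * q := Nat.mul_pos hp.pos hq.pos
  have hN2 : 2 ≤ p * q := hp.two_le.trans (Nat.le_mul_of_pos_right p hq.pos)
  obtain ⟨hcard, hprog⟩ := card_and_exists_hasProgressionHeights hN hV hδ
  have hfull : ∀ i, ∃ g ∈ latticeGroup V, g i ≠ 0 := by
    by_contra! hzero
    obtain ⟨i, hi⟩ := hzero
    rcases Nat.eq_zero_or_pos d with rfl | hd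
    · have hbot : latticeGroup V = ⊥ := by
        rw [eq_bot_iff]
        intro g hg
        refine AddSubgroup.mem_bot.2 (funext fun j => ?_)
        rw [show j = i from Fin.ext (by omega)]
        exact hi g hg
      rw [hbot, AddSubgroup.card_bot] at hcard
      omega
    · obtain ⟨e, rfl⟩ : ∃ e, d = e + 1 := ⟨d - 1, by omega⟩
      obtain ⟨Q, hQ, hE⟩ := exists_unimodEquiv_pyr hV hi
      refine hpyr ⟨e, rfl, Q, hQ, ?_⟩
      exact (Set.image_id (convexHull ℝ (Set.range fun (i : Fin (e + 1 + 1)) (j : Fin (e + 1)) =>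
        ((V i j : ℤ) : ℝ)))).symm ▸ hE
  obtain ⟨f, hf⟩ := hprog hfull
  rcases hf.classification hp hq hpq with ⟨hd, g, hg, hgi⟩ | hs | hs
  · left
    rw [Fintype.card_fin] at hd
    have hX : 2 ≤ p * q * (k+1) := hN2.trans (Nat.le_mul_of_pos_right _ k.succ_pos)
    refine ⟨by omega, ?_⟩
    refine unimodEquiv_simplexA hV hN hcard (t := ⟨d - 1, by omega⟩) ?_ ?_ hg (fun j => ?_)
    · dsimp only; omega
    · dsimp only
      rw [if_neg (by omega), Nat.cast_mul]
    · have hj := j.2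
      rw [hgi, Nat.cast_mul]
      simp only [Fin.ext_iff]
      split_ifs with h1 h2
      · rw [one_smul]
      · rw [one_smul]
      · omega
  · rcases hs.unimodEquiv hp hq hpq hV hδ with h | h
    · exact Or.inr (Or.inl h)
    · exact Or.inr (Or.inr (Or.inr (Or.inl h)))
  · rcases hs.unimodEquiv hq hp hpq.symm hV (by rwa [mul_comm q p]) with h | h
    · rw [mul_comm q (p+1), mul_comm q p] at h
      exact Or.inr (Or.inr (Or.inl h))
    · rw [mul_comm q p, mul_comm (q : ℤ) p] at h
      exact Or.inr (Or.inr (Or.inr (Or.inr h)))
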